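/- arXiv:2103.12008 — 2 statements merged into one kernel-verified Lean document; each statement's English description precedes it below -/
import Mathlib

section
/- Suppose S[ω] and S[μ] are integrally closed and fg^i ∉ S^{p∧p²} for every 1 ≤ i ≤ p−1. Then the conductor of R into A equals the (p−1)-st symbolic power of P, i.e. (A :_K R) = P^{(p−1)}, where P = (p, ω−h₁, μ−h₂)A is the unique height-one prime of A containing p. -/
/-- A height one prime ideal of a commutative ring. -/
def IsHeightOnePrime {S : Type*} [CommRing S] (P : Ideal S) : Prop :=
  ∃ hP : P.IsPrime, Order.height (⟨P, hP⟩ : PrimeSpectrum S) = 1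

/-- `c ∈ S` is square free if `P S_P = c S_P` for every height one prime `P` containing `c`. -/
def PaperSquarefree {S : Type*} [CommRing S] (c : S) : Prop :=
  ∀ (P : Ideal S) (hP : P.IsPrime), Order.height (⟨P, hP⟩ : PrimeSpectrum S) = 1 → c ∈ P →
    haveI := hP
    Ideal.map (algebraMap S (Localization.AtPrime P)) P =
      Ideal.span {algebraMap S (Localization.AtPrime P) c}

/-- Two elements satisfy `𝒜₁` if no height one prime contains both of them. -/
def SatisfiesA1 {S : Type*} [CommRing S] (f g : S) : Prop :=
  ∀ P : Ideal S, IsHeightOnePrime P → ¬(f ∈ P ∧ g ∈ P)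

/-- The depth of a module over a local ring: the supremum of the lengths of
regular sequences on `M` contained in the maximal ideal. -/
noncomputable def modDepth (S : Type*) [CommRing S] [IsLocalRing S]
    (M : Type*) [AddCommGroup M] [Module S M] : ℕ∞ :=
  sSup {n : ℕ∞ | ∃ rs : List S, (rs.length : ℕ∞) = n ∧
    (∀ r ∈ rs, r ∈ IsLocalRing.maximalIdeal S) ∧ RingTheory.Sequence.IsRegular M rs}

/-- A commutative ring is Cohen-Macaulay if each of its localizations at a prime
has depth equal to its Krull dimension. -/
def IsCMRing (R : Type*) [CommRing R] : Prop :=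
  ∀ (Q : Ideal R) (hQ : Q.IsPrime),
    haveI := hQ
    (modDepth (Localization.AtPrime Q) (Localization.AtPrime Q) : WithBot ℕ∞) =
      ringKrullDim (Localization.AtPrime Q)

/-- The `n`-th symbolic power of a prime ideal `P`, i.e. `Pⁿ A_P ∩ A`. -/
noncomputable def symbPow {A : Type*} [CommRing A] (P : Ideal A) (hP : P.IsPrime) (n : ℕ) :
    Ideal A :=
  haveI := hP
  Ideal.comap (algebraMap A (Localization.AtPrime P))
    (Ideal.map (algebraMap A (Localization.AtPrime P)) (P ^ n))

/-- `ω`, as an element of the subalgebra `A = S[ω,μ]`. -/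
noncomputable def omegaA {S : Type*} [CommRing S] {K : Type*} [Field K] [Algebra S K]
    (ω μ : K) : Algebra.adjoin S ({ω, μ} : Set K) :=
  ⟨ω, Algebra.subset_adjoin (Set.mem_insert _ _)⟩

/-- `μ`, as an element of the subalgebra `A = S[ω,μ]`. -/
noncomputable def muA {S : Type*} [CommRing S] {K : Type*} [Field K] [Algebra S K]
    (ω μ : K) : Algebra.adjoin S ({ω, μ} : Set K) :=
  ⟨μ, Algebra.subset_adjoin (Set.mem_insert_of_mem _ rfl)⟩

/-- The ideal `P = (p, ω−h₁, μ−h₂)` of `A = S[ω,μ]`. -/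
noncomputable def Pid {S : Type*} [CommRing S] {K : Type*} [Field K] [Algebra S K]
    (p : ℕ) (ω μ : K) (h₁ h₂ : S) : Ideal (Algebra.adjoin S ({ω, μ} : Set K)) :=
  Ideal.span {(p : Algebra.adjoin S ({ω, μ} : Set K)),
    omegaA ω μ - algebraMap S _ h₁, muA ω μ - algebraMap S _ h₂}

/-- The colon module `(A :_K N) = {x ∈ K : x·N ⊆ A}`, as an `S`-submodule of `K`. -/
noncomputable def colonSubmodule (S : Type*) [CommRing S] (K : Type*) [Field K] [Algebra S K]
    (A : Subalgebra S K) (N : Set K) : Submodule S K where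
  carrier := {x : K | ∀ z ∈ N, x * z ∈ A}
  add_mem' := fun hx hy z hz => by
    simpa [add_mul] using add_mem (hx z hz) (hy z hz)
  zero_mem' := fun z hz => by simpa using A.zero_mem
  smul_mem' := fun c x hx z hz => by
    rw [Algebra.smul_def, mul_assoc]
    exact mul_mem (A.algebraMap_mem c) (hx z hz)

/-- `M` admits a free resolution `0 → Sⁿ → Sᵐ → M → 0`; for a finitely generated
module over a Noetherian local ring this says exactly `pd_S(M) ≤ 1`. -/
def HasFreeResLengthLE1 (S : Type*) [CommRing S] (M : Type*) [AddCommGroup M] [Module S M] :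
    Prop :=
  ∃ (n m : ℕ) (φ : (Fin n → S) →ₗ[S] (Fin m → S)) (ψ : (Fin m → S) →ₗ[S] M),
    Function.Injective φ ∧ Function.Surjective ψ ∧ LinearMap.range φ = LinearMap.ker ψ

/-- The ideal `Q` contains an `S`-regular sequence of length three, i.e. `Q` has grade
(at least) three. -/
def ContainsRegSeq3 (S : Type*) [CommRing S] (Q : Ideal S) : Prop :=
  ∃ rs : List S, rs.length = 3 ∧ (∀ r ∈ rs, r ∈ Q) ∧ RingTheory.Sequence.IsRegular S rs

/-! Put `x = ω - h₁`, `y = μ - h₂`, `t = y / x`, and let `V` be the localization of `S` at `(p)`, a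
local ring with maximal ideal `(p)`. Expanding `(x + h₁) ^ p` and `(y + h₂) ^ p` gives
`x ^ p = p E₁(x)` and `y ^ p = p E₂(y)` for polynomials of degree less than `p`, where `E₁(x)` is a
unit of `V[x]` because `S[ω]` is integrally closed. Hence `E₁(x) t ^ p = E₂(x t)`, so that `t` is
integral of degree `p` over `V[x]`.

The condition on `f g ^ i` ensures that `V[x, t]` is integrally closed: either `E₂(0) / E₁(0)` is
not a `p`-th power in the residue field of `V` and `x` generates the maximal ideal of `V[x, t]`, or
it is the `p`-th power of a residue `d` and `t - d` generates it. So `V[x, t]` is the integral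
closure of `V` in `K`. Comparing coefficients of powers of `t`, its conductor into
`V[ω, μ] = V[x, x t]` is `x ^ (p - 1) V[x, t]`, which contracts to `P^{(p - 1)}` in `A`.

Finally `p R ⊆ A`: by the trace form `p f R` and `p g R` lie in `A`, and `A` is free over `S` while
`f` and `g` satisfy `𝒜₁`. Therefore membership in the conductor of `R` into `A` can be tested at
`p`.
-/

section NormalDomain

theorem dvd_of_isIntegral_div {R K : Type*} [CommRing R] [IsDomain R] [IsIntegrallyClosed R]
    [Field K] [Algebra R K] [FaithfulSMul R K] {a b : R} (hb : b ≠ 0)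
    (h : IsIntegral R (algebraMap R K a / algebraMap R K b)) : b ∣ a := by
  let := FractionRing.liftAlgebra R K
  have := FractionRing.isScalarTower_liftAlgebra R K
  let F := FractionRing R
  have hF : IsIntegral R (algebraMap R F a / algebraMap R F b) := by
    refine (isIntegral_algebraMap_iff (algebraMap F K).injective).1 ?_
    rwa [map_div₀, ← IsScalarTower.algebraMap_apply, ← IsScalarTower.algebraMap_apply]
  obtain ⟨c, hc⟩ := IsIntegrallyClosed.isIntegral_iff.1 hF
  have hb' : algebraMap R F b ≠ 0 := by simpa using hb
  rw [eq_div_iff hb', ← map_mul] at hc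
  exact ⟨c, by rw [← IsFractionRing.injective R F hc, mul_comm]⟩

variable {S L : Type*} [CommRing S] [Field L] [Algebra S L]

theorem mk_eq_zero_iff_isInteger {u : L} :
    Submodule.Quotient.mk (p := (1 : Submodule S L)) u = 0 ↔ IsLocalization.IsInteger S u := by
  rw [Submodule.Quotient.mk_eq_zero, Submodule.mem_one]; rfl

variable [IsDomain S] [IsFractionRing S L]

theorem exists_ne_zero_mem_of_isAssociatedPrime [IsNoetherianRing S] {q : Ideal S}
    (hq : IsAssociatedPrime q (L ⧸ (1 : Submodule S L))) : ∃ d ∈ q, d ≠ 0 := by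
  obtain ⟨-, x, rfl⟩ := isAssociatedPrime_iff.1 hq
  obtain ⟨u, rfl⟩ := Submodule.Quotient.mk_surjective _ x
  obtain ⟨d, hd⟩ := IsLocalization.exists_integer_multiple (nonZeroDivisors S) u
  refine ⟨d, ?_, nonZeroDivisors.coe_ne_zero d⟩
  rwa [Submodule.mem_colon_singleton, Submodule.mem_bot, ← Submodule.Quotient.mk_smul,
    mk_eq_zero_iff_isInteger]

variable [IsNoetherianRing S] [IsIntegrallyClosed S]

/- If every element of `q = (S : u)` sent `u` into `q`, then `u` would be integral over `S`; so some
`t ∈ q` has `t u = c ∉ q`, and this makes `q` minimal over the principal ideal `(t)`. -/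
theorem exists_mem_minimalPrimes_span_singleton_of_isAssociatedPrime {q : Ideal S}
    (hq : IsAssociatedPrime q (L ⧸ (1 : Submodule S L))) :
    ∃ t, q ∈ (Ideal.span {t}).minimalPrimes := by
  obtain ⟨d, hd, hd0⟩ := exists_ne_zero_mem_of_isAssociatedPrime hq
  obtain ⟨hqp, x, hx⟩ := isAssociatedPrime_iff.1 hq
  obtain ⟨u, rfl⟩ := Submodule.Quotient.mk_surjective _ x
  have mem_q (s : S) : s ∈ q ↔ ∃ c, algebraMap S L c = s • u := by
    rw [hx, Submodule.mem_colon_singleton, Submodule.mem_bot, ← Submodule.Quotient.mk_smul,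
      mk_eq_zero_iff_isInteger]
    rfl
  have exists_numerator : ∃ t c, algebraMap S L c = t • u ∧ t ∈ q ∧ c ∉ q := by
    by_contra! hcon
    have hint : IsIntegral S u := by
      refine isIntegral_of_smul_mem_submodule
        (Submodule.map (Algebra.linearMap S L) q) (fun hbot => hd0 ?_)
        (.map _ (IsNoetherian.noetherian q)) u ?_
      · simpa [hbot] using Submodule.mem_map_of_mem (f := Algebra.linearMap S L) hd
      · rintro _ ⟨t, ht, rfl⟩
        obtain ⟨c, hc⟩ := (mem_q t).1 ht
        exact ⟨c, hcon t c hc ht, by simp [hc, Algebra.smul_def, mul_comm]⟩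
    obtain ⟨c, hc⟩ := IsIntegrallyClosed.isIntegral_iff.1 hint
    exact hqp.ne_top ((Ideal.eq_top_iff_one q).2 ((mem_q 1).2 ⟨c, by simpa using hc⟩))
  obtain ⟨t, c, hc, ht, hcq⟩ := exists_numerator
  refine ⟨t, ⟨hqp, (Ideal.span_singleton_le_iff_mem _).2 ht⟩, ?_⟩
  rintro r ⟨hr, htr⟩ hrq s hs
  obtain ⟨e, he⟩ := (mem_q s).1 hs
  have hcs : c * s = t * e := IsFractionRing.injective S L <| by
    simp only [map_mul, hc, he, Algebra.smul_def]; ring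
  have hcsr : c * s ∈ r :=
    hcs ▸ Ideal.mul_mem_right _ _ ((Ideal.span_singleton_le_iff_mem _).1 htr)
  exact (hr.mem_or_mem hcsr).resolve_left fun h => hcq (hrq h)

theorem isHeightOnePrime_of_isAssociatedPrime {q : Ideal S}
    (hq : IsAssociatedPrime q (L ⧸ (1 : Submodule S L))) : IsHeightOnePrime q := by
  obtain ⟨t, ht⟩ := exists_mem_minimalPrimes_span_singleton_of_isAssociatedPrime hq
  obtain ⟨d, hd, hd0⟩ := exists_ne_zero_mem_of_isAssociatedPrime hq
  refine ⟨hq.isPrime, le_antisymm ?_ ?_⟩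
  · exact PrimeSpectrum.height_eq_orderHeight ⟨q, hq.isPrime⟩ ▸
      Ideal.height_le_one_of_isPrincipal_of_mem_minimalPrimes _ _ ht
  · rw [Order.one_le_iff_pos, Order.height_pos]
    intro hmin
    have hle := @hmin ⊥ bot_le
    exact hd0 (hle hd)

theorem isInteger_of_satisfiesA1 {f g : S} (h : SatisfiesA1 f g) {u : L}
    (hf : IsLocalization.IsInteger S (f • u)) (hg : IsLocalization.IsInteger S (g • u)) :
    IsLocalization.IsInteger S u := by
  by_contra hu
  obtain ⟨q, hq, hle⟩ := exists_le_isAssociatedPrime_of_isNoetherianRing S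
    (Submodule.Quotient.mk (p := (1 : Submodule S L)) u) (mk_eq_zero_iff_isInteger.not.2 hu)
  have mem_q {s : S} (hs : IsLocalization.IsInteger S (s • u)) : s ∈ q := hle <| by
    rwa [Submodule.mem_colon_singleton, Submodule.mem_bot, ← Submodule.Quotient.mk_smul,
      mk_eq_zero_iff_isInteger]
  exact h q (isHeightOnePrime_of_isAssociatedPrime hq) ⟨mem_q hf, mem_q hg⟩

end NormalDomain

section SatisfiesA1

variable {S : Type*} [CommRing S]

theorem satisfiesA1_of_isUnit {f : S} (hf : IsUnit f) (g : S) : SatisfiesA1 f g :=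
  fun _ ⟨hP, _⟩ h => hP.ne_top (Ideal.eq_top_of_isUnit_mem _ h.1 hf)

theorem satisfiesA1_of_prime_of_not_dvd [IsDomain S] {p s : S} (hp : Prime p) (hs : ¬p ∣ s) :
    SatisfiesA1 p s := by
  rintro P ⟨hP, hht⟩ ⟨hpP, hsP⟩
  let Q : PrimeSpectrum S := ⟨Ideal.span {p}, (Ideal.span_singleton_prime hp.ne_zero).2 hp⟩
  have hbot : (⊥ : PrimeSpectrum S) < Q := by
    refine lt_of_le_not_ge bot_le fun h => hp.ne_zero ?_
    simpa using h (Ideal.mem_span_singleton_self p)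
  have hlt : Q < ⟨P, hP⟩ :=
    lt_of_le_not_ge ((Ideal.span_singleton_le_iff_mem _).2 hpP)
      fun h => hs (Ideal.mem_span_singleton.1 (h hsP))
  have hQ : 0 < Order.height Q := Order.height_pos.2 fun hmin => hbot.not_ge (hmin hbot.le)
  have hQ' : Order.height Q + 1 ≤ 0 + 1 := by simpa [hht] using Order.height_add_one_le hlt
  exact hQ.not_ge ((ENat.add_le_add_iff_right ENat.one_ne_top).1 hQ')

end SatisfiesA1

section ResidueField

variable {k : Type*} [Field k] {p : ℕ} [Fact p.Prime] [CharP k p]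

theorem exists_lt_natCast_eq_of_pow_eq_self {x : k} (hx : x ^ p = x) : ∃ i < p, (i : k) = x := by
  obtain ⟨n, rfl⟩ := (mem_bot_iff_intCast p k).1 ((Subfield.mem_bot_iff_pow_eq_self k p).2 hx)
  have hcast : (((n : ZMod p).val : ℕ) : k) = ((n : ZMod p).cast : k) := ZMod.natCast_val _
  exact ⟨(n : ZMod p).val, ZMod.val_lt _, by rw [hcast, ZMod.cast_intCast']⟩

/- Here `j = h₁ d / h₂` lies in the prime field and `b h₁ ^ p = a j h₂ ^ p`, so `i = -1 / j`. -/
theorem exists_natCast_add_eq_zero {a b d h₁ h₂ : k} (hb : b ≠ 0) (hh₂ : h₂ ≠ 0)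
    (hd : a * d ^ p = b) (hdh : h₁ ^ (p - 1) * d ^ p = h₂ ^ (p - 1) * d) :
    ∃ i : ℕ, 1 ≤ i ∧ i ≤ p - 1 ∧ a * h₂ ^ p + i * b * h₁ ^ p = 0 := by
  have hp : p ≠ 0 := (Fact.out : p.Prime).ne_zero
  have hd0 : d ≠ 0 := fun h => hb (by rw [← hd, h, zero_pow hp, mul_zero])
  have hp1 : p - 1 ≠ 0 := Nat.sub_ne_zero_of_lt (Fact.out : p.Prime).one_lt
  have hh₁ : h₁ ≠ 0 := fun h => by simp [h, zero_pow hp1, hh₂, hd0] at hdh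
  set j := h₁ * d / h₂ with hj
  have hj0 : j ≠ 0 := div_ne_zero (mul_ne_zero hh₁ hd0) hh₂
  have hjh : j * h₂ = h₁ * d := div_mul_cancel₀ _ hh₂
  have hjp : j ^ p = j := by
    rw [hj, div_pow, mul_pow, div_eq_div_iff (pow_ne_zero p hh₂) hh₂, ← mul_pow_sub_one hp h₁,
      ← mul_pow_sub_one hp h₂]
    linear_combination h₁ * h₂ * hdh
  obtain ⟨i, hip, hi⟩ := exists_lt_natCast_eq_of_pow_eq_self (k := k) (p := p) (x := -j⁻¹) <| by
    rw [← frobenius_def, map_neg, map_inv₀, frobenius_def, hjp]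
  have hi0 : i ≠ 0 := by rintro rfl; simp [hj0] at hi
  refine ⟨i, Nat.one_le_iff_ne_zero.2 hi0, Nat.le_sub_one_of_lt hip, ?_⟩
  calc a * h₂ ^ p + i * b * h₁ ^ p = a * h₂ ^ p - j⁻¹ * (a * (h₁ * d) ^ p) := by
        rw [hi, ← hd, mul_pow]; ring
    _ = 0 := by rw [← hjh, mul_pow, hjp]; field_simp; ring

end ResidueField

section PowersModSquare

variable {S : Type*} [CommRing S] {p : ℕ} {h₁ h₂ a b : S}

theorem exists_mul_pow_eq_pow_add_mul_sq {i : ℕ} (hi : 1 ≤ i)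
    (hdvd : (p : S) ∣ a * h₂ ^ p + i * b * h₁ ^ p) :
    ∃ x y : S, (h₁ ^ p + a * p) * (h₂ ^ p + b * p) ^ i = x ^ p + y * (p : S) ^ 2 := by
  obtain ⟨c, hc⟩ := hdvd
  obtain ⟨e, he⟩ := Polynomial.powAddExpansion (h₂ ^ p) (b * (p : S)) i
  obtain ⟨m, rfl⟩ := Nat.exists_eq_add_of_le' hi
  rw [Nat.add_sub_cancel] at he
  refine ⟨h₁ * h₂ ^ (m + 1), (h₂ ^ p) ^ m * c + h₁ ^ p * e * b ^ 2
    + a * ((m + 1 : ℕ) * (h₂ ^ p) ^ m * b + e * b ^ 2 * p), ?_⟩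
  have hpow : (h₁ * h₂ ^ (m + 1)) ^ p = h₁ ^ p * (h₂ ^ p) ^ (m + 1) := by
    rw [mul_pow, pow_right_comm]
  rw [he, hpow]
  linear_combination (p : S) * (h₂ ^ p) ^ m * hc

theorem exists_mul_sq_eq_pow_add_mul_sq (hp : p ≠ 0) (hdvd : (p : S) ∣ h₂) (f : S) :
    ∃ x y : S, f * (h₂ ^ p + b * p) ^ 2 = x ^ p + y * (p : S) ^ 2 := by
  obtain ⟨c, hc⟩ : (p : S) ∣ h₂ ^ p + b * p := dvd_add (dvd_pow hdvd hp) (dvd_mul_left _ _)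
  exact ⟨0, f * c ^ 2, by rw [zero_pow hp, hc]; ring⟩

end PowersModSquare

section PowRemainder

open Polynomial Finset

variable {R : Type*} [CommRing R] {p : ℕ}

/-- The polynomial `a - ((X + h) ^ p - X ^ p - h ^ p) / p` of degree less than `p`. If
`θ ^ p = h ^ p + a * p`, then `x = θ - h` satisfies `x ^ p = p * E(x)` for this polynomial `E`. -/
noncomputable def powRemainder (p : ℕ) (h a : R) : R[X] :=
  C a - ∑ k ∈ Ioo 0 p, monomial k (h ^ (p - k) * (p.choose k / p : ℕ))

theorem sub_pow_eq_mul_aeval_powRemainder {A : Type*} [CommRing A] [Algebra R A] (hp : p.Prime)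
    {h a : R} {θ : A} (hθ : θ ^ p = algebraMap R A (h ^ p + a * p)) :
    (θ - algebraMap R A h) ^ p = p * aeval (θ - algebraMap R A h) (powRemainder p h a) := by
  have expand := add_pow_prime_eq' hp (θ - algebraMap R A h) (algebraMap R A h)
  have aeval_sum : aeval (θ - algebraMap R A h) (powRemainder p h a) = algebraMap R A a -
      ∑ k ∈ Ioo 0 p, (θ - algebraMap R A h) ^ k * algebraMap R A h ^ (p - k) *
        (p.choose k / p : ℕ) := by
    simp only [powRemainder, map_sub, map_sum, aeval_C, aeval_monomial, map_mul, map_pow,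
      map_natCast]
    congr 1
    exact sum_congr rfl fun k _ => by ring
  rw [sub_add_cancel, hθ] at expand
  simp only [map_add, map_mul, map_pow, map_natCast] at expand
  rw [aeval_sum]
  linear_combination -expand

theorem coeff_powRemainder_zero (h a : R) : (powRemainder p h a).coeff 0 = a := by
  simp [powRemainder, coeff_monomial]

theorem coeff_powRemainder_one (hp : p.Prime) (h a : R) :
    (powRemainder p h a).coeff 1 = -h ^ (p - 1) := by
  simp [powRemainder, coeff_monomial, hp.one_lt, Nat.div_self hp.pos]

theorem natDegree_powRemainder_lt (hp : p ≠ 0) (h a : R) : (powRemainder p h a).natDegree < p := by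
  refine Nat.lt_of_le_sub_one (Nat.pos_of_ne_zero hp) ?_
  refine (natDegree_sub_le_of_le (natDegree_C a).le
    (natDegree_sum_le_of_forall_le _ _ fun k hk => ?_)).trans (zero_max _).le
  exact (natDegree_monomial_le _).trans (Nat.le_sub_one_of_lt (mem_Ioo.1 hk).2)

end PowRemainder

section TwoGenerators

open Polynomial IntermediateField

variable {L K : Type*} [Field L] [Field K] [Algebra L K]

theorem adjoin_simple_adjoin_eq_top {x t : K} (htop : Algebra.adjoin L ({x, t} : Set K) = ⊤) :
    Algebra.adjoin L⟮x⟯ {t} = ⊤ := by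
  have hle : Algebra.adjoin L ({x, t} : Set K) ≤
      (Algebra.adjoin L⟮x⟯ {t}).restrictScalars L := by
    refine Algebra.adjoin_le (Set.insert_subset ?_ ?_)
    · exact (Algebra.adjoin L⟮x⟯ {t}).algebraMap_mem (AdjoinSimple.gen L x)
    · simp
  exact eq_top_iff.2 fun z _ => hle (htop ▸ Algebra.mem_top)

theorem natDegree_minpoly_mul_natDegree_minpoly [FiniteDimensional L K] {x t : K}
    (htop : Algebra.adjoin L ({x, t} : Set K) = ⊤) :
    (minpoly L x).natDegree * (minpoly L⟮x⟯ t).natDegree = Module.finrank L K := by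
  have hx : IsIntegral L x := .of_finite L x
  have ht : IsIntegral L⟮x⟯ t := .of_finite _ t
  have htop' : L⟮x⟯⟮t⟯ = ⊤ := by
    rw [← toSubalgebra_injective.eq_iff, adjoin_simple_toSubalgebra_of_isAlgebraic ht.isAlgebraic,
      adjoin_simple_adjoin_eq_top htop, top_toSubalgebra]
  rw [← adjoin.finrank hx, ← adjoin.finrank ht, htop', finrank_top',
    Module.finrank_mul_finrank]

theorem minpoly_eq_of_finrank_eq_mul [FiniteDimensional L K] {x t : K}
    (htop : Algebra.adjoin L ({x, t} : Set K) = ⊤) {q₁ : L[X]} {q₂ : L⟮x⟯[X]}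
    (hq₁ : q₁.Monic) (hx : aeval x q₁ = 0) (hq₂ : q₂.Monic) (ht : aeval t q₂ = 0)
    (hdeg : Module.finrank L K = q₁.natDegree * q₂.natDegree) :
    minpoly L x = q₁ ∧ minpoly L⟮x⟯ t = q₂ := by
  have dvd₁ := minpoly.dvd L x hx
  have dvd₂ := minpoly.dvd L⟮x⟯ t ht
  have le₁ := natDegree_le_of_dvd dvd₁ hq₁.ne_zero
  have le₂ := natDegree_le_of_dvd dvd₂ hq₂.ne_zero
  have hmul := (natDegree_minpoly_mul_natDegree_minpoly htop).trans hdeg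
  have hpos : 0 < q₁.natDegree * q₂.natDegree := hdeg ▸ Module.finrank_pos
  obtain ⟨pos₁, pos₂⟩ := CanonicallyOrderedAdd.mul_pos.1 hpos
  have ge₁ : q₁.natDegree ≤ (minpoly L x).natDegree := by
    by_contra! hlt
    exact (Nat.mul_lt_mul_of_lt_of_le hlt le₂ pos₂).ne hmul
  have ge₂ : q₂.natDegree ≤ (minpoly L⟮x⟯ t).natDegree := by
    by_contra! hlt
    exact (Nat.mul_lt_mul_of_le_of_lt le₁ hlt pos₁).ne hmul
  exact ⟨(eq_of_monic_of_dvd_of_natDegree_le (minpoly.monic (.of_finite L x)) hq₁ dvd₁ ge₁).symm,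
    (eq_of_monic_of_dvd_of_natDegree_le (minpoly.monic (.of_finite _ t)) hq₂ dvd₂ ge₂).symm⟩

theorem eq_zero_of_aeval_eq_zero_of_natDegree_lt {T F : Type*} [CommRing T] [Field F] [Algebra T F]
    [FaithfulSMul T F] [Algebra F K] [Algebra T K] [IsScalarTower T F K] {t : K} {Q : T[X]}
    (hQ : aeval t Q = 0) (hdeg : Q.natDegree < (minpoly F t).natDegree) : Q = 0 := by
  have hinj := FaithfulSMul.algebraMap_injective T F
  rw [← Polynomial.map_eq_zero_iff hinj]
  by_contra hne
  have hle := minpoly.degree_le_of_ne_zero F t hne (by rwa [aeval_map_algebraMap])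
  rw [← natDegree_map_eq_of_injective hinj] at hdeg
  exact (natDegree_le_natDegree hle).not_gt hdeg

theorem toSubmodule_adjoin_pair_eq_span {R A : Type*} [CommRing R] [CommRing A] [Algebra R A]
    {x y : A} {q₁ q₂ : R[X]} (hq₁ : q₁.Monic) (hx : aeval x q₁ = 0) (hq₂ : q₂.Monic)
    (hy : aeval y q₂ = 0) : Subalgebra.toSubmodule (Algebra.adjoin R {x, y}) =
      Submodule.span R (Set.range fun ij : Fin q₁.natDegree × Fin q₂.natDegree =>
        x ^ (ij.1 : ℕ) * y ^ (ij.2 : ℕ)) := by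
  rw [Set.insert_eq, Algebra.adjoin_union_coe_submodule,
    ← Submodule.span_range_natDegree_eq_adjoin hq₁ hx,
    ← Submodule.span_range_natDegree_eq_adjoin hq₂ hy, Submodule.span_mul_span]
  congr 1
  ext z
  simp only [Finset.coe_image, Finset.coe_range, Set.mem_mul, Set.mem_image, Set.mem_Iio,
    Set.mem_range, Prod.exists, Fin.exists_iff]
  grind

theorem exists_basis_span_eq_adjoin_pair {S : Type*} [CommRing S] [Algebra S L]
    [Algebra S K] [IsScalarTower S L K] {x y : K} (htop : Algebra.adjoin L ({x, y} : Set K) = ⊤)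
    {q₁ q₂ : S[X]} (hq₁ : q₁.Monic) (hx : aeval x q₁ = 0) (hq₂ : q₂.Monic) (hy : aeval y q₂ = 0)
    (hdeg : Module.finrank L K = q₁.natDegree * q₂.natDegree) :
    ∃ bas : Module.Basis (Fin q₁.natDegree × Fin q₂.natDegree) L K,
      Submodule.span S (Set.range bas) = Subalgebra.toSubmodule (Algebra.adjoin S {x, y}) := by
  have hspan := toSubmodule_adjoin_pair_eq_span (hq₁.map (algebraMap S L)) (x := x) (by simpa)
    (hq₂.map (algebraMap S L)) (y := y) (by simpa)
  rw [htop, Algebra.top_toSubmodule, hq₁.natDegree_map, hq₂.natDegree_map] at hspan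
  refine ⟨basisOfTopLeSpanOfCardEqFinrank _ hspan.le (by simp [hdeg]), ?_⟩
  rw [coe_basisOfTopLeSpanOfCardEqFinrank, toSubmodule_adjoin_pair_eq_span hq₁ hx hq₂ hy]

theorem mem_span_of_satisfiesA1 {S : Type*} [CommRing S] [IsDomain S] [IsNoetherianRing S]
    [IsIntegrallyClosed S] [Algebra S L] [IsFractionRing S L] [Algebra S K] [IsScalarTower S L K]
    {ι : Type*} (bas : Module.Basis ι L K) {f g : S} (h : SatisfiesA1 f g) {z : K}
    (hf : f • z ∈ Submodule.span S (Set.range bas))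
    (hg : g • z ∈ Submodule.span S (Set.range bas)) :
    z ∈ Submodule.span S (Set.range bas) := by
  rw [bas.mem_span_iff_repr_mem S] at hf hg ⊢
  have repr_smul (s : S) (i : ι) : bas.repr (s • z) i = s • bas.repr z i := by
    rw [← algebraMap_smul L s z, map_smul, Finsupp.smul_apply, algebraMap_smul]
  exact fun i => isInteger_of_satisfiesA1 h (repr_smul f i ▸ hf i) (repr_smul g i ▸ hg i)

theorem mem_adjoin_pair_of_satisfiesA1 {S : Type*} [CommRing S] [IsDomain S] [IsNoetherianRing S]
    [IsIntegrallyClosed S] [Algebra S L] [IsFractionRing S L] [Algebra S K] [IsScalarTower S L K]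
    {x y : K} (htop : Algebra.adjoin L ({x, y} : Set K) = ⊤) {q₁ q₂ : S[X]} (hq₁ : q₁.Monic)
    (hx : aeval x q₁ = 0) (hq₂ : q₂.Monic) (hy : aeval y q₂ = 0)
    (hdeg : Module.finrank L K = q₁.natDegree * q₂.natDegree) {f g : S} (h : SatisfiesA1 f g)
    {z : K} (hf : f • z ∈ Algebra.adjoin S {x, y}) (hg : g • z ∈ Algebra.adjoin S {x, y}) :
    z ∈ Algebra.adjoin S {x, y} := by
  obtain ⟨bas, hbas⟩ := exists_basis_span_eq_adjoin_pair htop hq₁ hx hq₂ hy hdeg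
  rw [← Subalgebra.mem_toSubmodule, ← hbas] at hf hg ⊢
  exact mem_span_of_satisfiesA1 bas h hf hg

end TwoGenerators

section AdjoinSimple

open Polynomial IntermediateField

variable {S L K : Type*} [CommRing S] [Field L] [Algebra S L] [Field K] [Algebra L K] [Algebra S K]
  [IsScalarTower S L K]

theorem adjoin_singleton_le_adjoin_simple (x : K) :
    Algebra.adjoin S {x} ≤ L⟮x⟯.toSubalgebra.restrictScalars S :=
  Algebra.adjoin_le (Set.singleton_subset_iff.2 (mem_adjoin_simple_self L x))

/-- `L(x)` as an algebra over `S[x]`, through the inclusion of subrings of `K`. A local instance, so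
as not to add a second path to other algebra structures on `L(x)`. -/
abbrev algebraAdjoinSimple (x : K) : Algebra (Algebra.adjoin S {x}) L⟮x⟯ :=
  (Subalgebra.inclusion (adjoin_singleton_le_adjoin_simple (L := L) x)).toAlgebra

attribute [local instance] algebraAdjoinSimple

instance isScalarTower_adjoinSimple (x : K) : IsScalarTower (Algebra.adjoin S {x}) L⟮x⟯ K :=
  .of_algebraMap_eq fun _ => rfl

instance faithfulSMul_adjoinSimple (x : K) : FaithfulSMul (Algebra.adjoin S {x}) L⟮x⟯ :=
  (faithfulSMul_iff_algebraMap_injective _ _).2 (Subalgebra.inclusion_injective _)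

instance isScalarTower_base_adjoinSimple (x : K) : IsScalarTower S L⟮x⟯ K :=
  .of_algebraMap_eq fun _ => rfl

theorem isFractionRing_adjoinSimple [Nontrivial S] [IsFractionRing S L] {x : K}
    (hx : IsIntegral L x) :
    IsFractionRing (Algebra.adjoin S {x}) L⟮x⟯ := by
  refine .of_field _ _ fun ⟨z, hz⟩ => ?_
  rw [← mem_toSubalgebra, adjoin_simple_toSubalgebra_of_isAlgebraic hx.isAlgebraic] at hz
  obtain ⟨s, hs⟩ := multiple_mem_adjoin_of_mem_localization_adjoin (nonZeroDivisors S) L _ z hz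
  have hs0 : algebraMap S K s ≠ 0 := by
    rw [IsScalarTower.algebraMap_apply S L K, _root_.map_ne_zero]
    exact IsLocalization.to_map_ne_zero_of_mem_nonZeroDivisors L le_rfl s.2
  refine ⟨⟨_, hs⟩, algebraMap S _ s, Subtype.ext ?_⟩
  change z = s • z / algebraMap S K s
  rw [Submonoid.smul_def, Algebra.smul_def, mul_div_cancel_left₀ _ hs0]

theorem aeval_derivative_minpoly_mul_mem_adjoin {T F : Type*} [CommRing T] [IsDomain T]
    [IsIntegrallyClosed T] [Field F] [Algebra T F] [IsFractionRing T F] [Algebra F K] [Algebra T K]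
    [IsScalarTower T F K] [FiniteDimensional F K] [Algebra.IsSeparable F K] {y r : K}
    (htop : Algebra.adjoin F {y} = ⊤) (hy : IsIntegral T y) (hr : IsIntegral T r) :
    aeval y (derivative (minpoly F y)) * r ∈ Algebra.adjoin T {y} := by
  have hdual : r ∈ (Algebra.traceForm F K).dualSubmodule
      (Subalgebra.toSubmodule (Algebra.adjoin T {y})) := by
    rw [LinearMap.BilinForm.mem_dualSubmodule]
    intro z hz
    have hzi : IsIntegral T z := .of_mem_of_fg _ hy.fg_adjoin_singleton _ hz
    rw [Submodule.mem_one]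
    exact IsIntegrallyClosed.isIntegral_iff.1 (Algebra.isIntegral_trace (L := F) (hr.mul hzi))
  rw [traceForm_dualSubmodule_adjoin T F htop hy] at hdual
  obtain ⟨z, hz, rfl⟩ := (Submodule.mem_smul_pointwise_iff_exists _ _ _).1 hdual
  have hne : aeval y (derivative (minpoly F y)) ≠ 0 :=
    (Algebra.IsSeparable.isSeparable F y).aeval_derivative_ne_zero (minpoly.aeval F y)
  rwa [smul_eq_mul, mul_inv_cancel_left₀ hne]

theorem minpoly_adjoin_simple_eq_map {x y : K} [FiniteDimensional L K]
    (htop : Algebra.adjoin L ({x, y} : Set K) = ⊤) {q₁ q₂ : S[X]} (hq₁ : q₁.Monic)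
    (hx : aeval x q₁ = 0) (hq₂ : q₂.Monic) (hy : aeval y q₂ = 0)
    (hdeg : Module.finrank L K = q₁.natDegree * q₂.natDegree) :
    minpoly L⟮x⟯ y = q₂.map (algebraMap S L⟮x⟯) :=
  (minpoly_eq_of_finrank_eq_mul htop (hq₁.map (algebraMap S L))
    (by rwa [aeval_map_algebraMap]) (hq₂.map (algebraMap S L⟮x⟯)) (by rwa [aeval_map_algebraMap])
    (by rw [hq₁.natDegree_map, hq₂.natDegree_map, hdeg])).2

theorem aeval_derivative_mul_mem_adjoin_pair [CharZero L] [IsDomain S] [IsFractionRing S L]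
    {x y : K} [FiniteDimensional L K] [IsIntegrallyClosed (Algebra.adjoin S ({x} : Set K))]
    (htop : Algebra.adjoin L ({x, y} : Set K) = ⊤) {q₁ q₂ : S[X]} (hq₁ : q₁.Monic)
    (hx : aeval x q₁ = 0) (hq₂ : q₂.Monic) (hy : aeval y q₂ = 0)
    (hdeg : Module.finrank L K = q₁.natDegree * q₂.natDegree) {r : K} (hr : IsIntegral S r) :
    aeval y (derivative q₂) * r ∈ Algebra.adjoin S ({x, y} : Set K) := by
  have : CharZero L⟮x⟯ := charZero_of_injective_algebraMap (algebraMap L L⟮x⟯).injective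
  have : IsFractionRing (Algebra.adjoin S ({x} : Set K)) L⟮x⟯ :=
    isFractionRing_adjoinSimple (.of_finite L x)
  have hmem := aeval_derivative_minpoly_mul_mem_adjoin
    (T := Algebra.adjoin S ({x} : Set K)) (F := L⟮x⟯) (adjoin_simple_adjoin_eq_top htop)
    (IsIntegral.tower_top ⟨q₂, hq₂, hy⟩) (hr.tower_top)
  rwa [minpoly_adjoin_simple_eq_map htop hq₁ hx hq₂ hy hdeg, derivative_map, aeval_map_algebraMap,
    ← Subalgebra.mem_restrictScalars S, ← Algebra.adjoin_union_eq_adjoin_adjoin,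
    ← Set.insert_eq] at hmem

theorem smul_mem_adjoin_pair_of_isIntegral [CharZero L] [IsDomain S] [IsFractionRing S L] {p : ℕ}
    (hp : p ≠ 0) {f g : S} {ω μ : K} (hω : ω ^ p = algebraMap S K f)
    (hμ : μ ^ p = algebraMap S K g) (htop : Algebra.adjoin L ({ω, μ} : Set K) = ⊤)
    (hdeg : Module.finrank L K = p ^ 2) [IsIntegrallyClosed (Algebra.adjoin S ({ω} : Set K))]
    {r : K} (hr : IsIntegral S r) : g • (p • r) ∈ Algebra.adjoin S ({ω, μ} : Set K) := by
  have : FiniteDimensional L K := Module.finite_of_finrank_pos (hdeg ▸ by positivity)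
  have hmem := aeval_derivative_mul_mem_adjoin_pair htop (monic_X_pow_sub_C f hp) (by simp [hω])
    (monic_X_pow_sub_C g hp) (by simp [hμ])
    (by rw [hdeg, natDegree_X_pow_sub_C, natDegree_X_pow_sub_C, sq]) hr
  have hsplit : g • (p • r) = μ * (aeval μ (derivative (X ^ p - C g)) * r) := by
    have hpow : μ * μ ^ (p - 1) = algebraMap S K g := by rw [mul_pow_sub_one hp, hμ]
    rw [Algebra.smul_def, nsmul_eq_mul, ← hpow]
    simp only [derivative_sub, derivative_X_pow, derivative_C, sub_zero, map_mul, map_natCast,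
      map_pow, aeval_X]
    ring
  rw [hsplit]
  exact mul_mem (Algebra.subset_adjoin (Set.mem_insert_of_mem _ rfl)) hmem

theorem nsmul_mem_adjoin_pair_of_isIntegral [CharZero L] [IsDomain S] [IsNoetherianRing S]
    [IsIntegrallyClosed S] [IsFractionRing S L] {p : ℕ} (hp : p ≠ 0) {f g : S}
    (hfg : SatisfiesA1 f g) {ω μ : K} (hω : ω ^ p = algebraMap S K f)
    (hμ : μ ^ p = algebraMap S K g) (htop : Algebra.adjoin L ({ω, μ} : Set K) = ⊤)
    (hdeg : Module.finrank L K = p ^ 2) [IsIntegrallyClosed (Algebra.adjoin S ({ω} : Set K))]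
    [IsIntegrallyClosed (Algebra.adjoin S ({μ} : Set K))] {r : K} (hr : IsIntegral S r) :
    p • r ∈ Algebra.adjoin S ({ω, μ} : Set K) := by
  have hf : f • (p • r) ∈ Algebra.adjoin S ({ω, μ} : Set K) := by
    rw [Set.pair_comm] at htop ⊢
    exact smul_mem_adjoin_pair_of_isIntegral hp hμ hω htop hdeg hr
  exact mem_adjoin_pair_of_satisfiesA1 htop (monic_X_pow_sub_C f hp) (by simp [hω])
    (monic_X_pow_sub_C g hp) (by simp [hμ]) (by simp [hdeg, sq]) hfg hf
    (smul_mem_adjoin_pair_of_isIntegral hp hω hμ htop hdeg hr)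

end AdjoinSimple

section PrimeNotDvd

open Polynomial

theorem dvd_pow_pred_of_pow_eq {R : Type*} [CommRing R] [IsDomain R] [IsIntegrallyClosed R]
    {n : ℕ} (hn : 2 ≤ n) {q a x u : R} (hq : q ≠ 0) (h : x ^ n = q * (q * a + x * u)) :
    q ∣ x ^ (n - 1) := by
  refine dvd_of_isIntegral_div (K := FractionRing R) hq
    ⟨X ^ 2 - C u * X - C (a * x ^ (n - 2)), by monicity!, ?_⟩
  obtain ⟨m, rfl⟩ := Nat.exists_eq_add_of_le' hn
  have hq' : algebraMap R (FractionRing R) q ≠ 0 := by simpa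
  have h' := congrArg (algebraMap R (FractionRing R)) h
  simp only [map_pow, map_mul, map_add] at h'
  simp only [eval₂_sub, eval₂_mul, eval₂_pow, eval₂_X, eval₂_C, map_mul, map_pow,
    Nat.add_sub_cancel, Nat.add_succ_sub_one]
  field_simp
  linear_combination algebraMap R (FractionRing R) x ^ m * h'

variable {S A : Type*} [CommRing S] [CommRing A] [Nontrivial A] [Algebra S A]

theorem exists_natDegree_lt_aeval_eq {q : S[X]} (hq : q.Monic) {θ z : A} (hθ : aeval θ q = 0)
    (hz : z ∈ Algebra.adjoin S {θ}) : ∃ G : S[X], G.natDegree < q.natDegree ∧ aeval θ G = z := by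
  obtain ⟨G, rfl⟩ := Algebra.adjoin_singleton_eq_range_aeval S θ ▸ hz
  exact ⟨G %ₘ q, natDegree_modByMonic_lt G hq fun h => by simp [h] at hθ,
    aeval_modByMonic_eq_self_of_root hθ⟩

theorem isUnit_of_mul_eq_aeval_monic {θ z : A} {q Q : S[X]} (hq : q.Monic)
    (hθ : aeval θ q = 0) (hind : ∀ G : S[X], G.natDegree < q.natDegree → aeval θ G = 0 → G = 0)
    (hQ : Q.Monic) (hdeg : Q.natDegree < q.natDegree) (hz : z ∈ Algebra.adjoin S {θ}) {c : S}
    (h : algebraMap S A c * z = aeval θ Q) : IsUnit c := by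
  obtain ⟨G, hG, rfl⟩ := exists_natDegree_lt_aeval_eq hq hθ hz
  have hzero : C c * G - Q = 0 := by
    refine hind _ ((natDegree_sub_le _ _).trans_lt ?_) (by simp [h])
    exact max_lt ((natDegree_C_mul_le _ _).trans_lt hG) hdeg
  have hcoeff := congrArg (coeff · Q.natDegree) (sub_eq_zero.1 hzero)
  simp only [coeff_C_mul, hQ.coeff_natDegree] at hcoeff
  exact .of_mul_eq_one _ hcoeff

theorem not_dvd_of_pow_eq_of_isIntegrallyClosed {K : Type*} [Field K] [Algebra S K]
    {p : ℕ} (hp : p.Prime) (hp0 : (p : K) ≠ 0) (hpu : ¬IsUnit (p : S)) {h a : S} {θ : K}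
    (hθ : θ ^ p = algebraMap S K (h ^ p + a * p))
    (hind : ∀ G : S[X], G.natDegree < p → aeval θ G = 0 → G = 0)
    [IsIntegrallyClosed (Algebra.adjoin S ({θ} : Set K))] : ¬(p : S) ∣ a := by
  rintro ⟨a', rfl⟩
  let T := Algebra.adjoin S ({θ} : Set K)
  let ϑ : T := ⟨θ, Algebra.self_mem_adjoin_singleton S θ⟩
  have hp0' : (p : T) ≠ 0 := fun h0 => hp0 (by simpa using congrArg (algebraMap T K) h0)
  have hpow := sub_pow_eq_mul_aeval_powRemainder hp (θ := ϑ) (h := h) (a := p * a')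
    (Subtype.ext hθ)
  rw [← divX_mul_X_add (powRemainder p h _), coeff_powRemainder_zero] at hpow
  simp only [map_add, map_mul, aeval_X, aeval_C, map_natCast] at hpow
  rw [add_comm, mul_comm (aeval _ _)] at hpow
  obtain ⟨z, hz⟩ := dvd_pow_pred_of_pow_eq hp.two_le hp0' hpow
  have : Nontrivial S := (algebraMap S K).domain_nontrivial
  refine hpu (isUnit_of_mul_eq_aeval_monic (monic_X_pow_sub_C (h ^ p + p * a' * p) hp.ne_zero)
    (by simpa [sub_eq_zero] using hθ) ?_ ((monic_X_sub_C h).pow (p - 1)) ?_ z.2 ?_)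
  · simpa only [natDegree_X_pow_sub_C] using hind
  · rw [natDegree_X_pow_sub_C, (monic_X_sub_C h).natDegree_pow, natDegree_X_sub_C, mul_one]
    exact Nat.sub_one_lt hp.ne_zero
  · simpa [ϑ] using (congrArg (algebraMap T K) hz).symm

end PrimeNotDvd

section Conductor

open Polynomial

variable {T K : Type*} [CommRing T] [CommRing K] [Nontrivial K] [Algebra T K]

theorem exists_pow_dvd_coeff_aeval_eq_iff {f : T[X]} (hf : f.Monic) {t : K} (ht : aeval t f = 0)
    (x : T) {z : K} : z ∈ Algebra.adjoin T {x • t} ↔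
      ∃ H : T[X], H.natDegree < f.natDegree ∧ (∀ i, x ^ i ∣ H.coeff i) ∧ aeval t H = z := by
  constructor
  · intro hz
    obtain ⟨G, hG, rfl⟩ := exists_natDegree_lt_aeval_eq ((monic_scaleRoots_iff x).2 hf)
      (by simpa [Algebra.smul_def] using scaleRoots_aeval_eq_zero ht) hz
    rw [natDegree_scaleRoots] at hG
    refine ⟨G.comp (C x * X), (natDegree_comp_le.trans ?_).trans_lt hG, fun i => ?_, ?_⟩
    · exact mul_le_of_le_one_right' ((natDegree_C_mul_le _ _).trans natDegree_X_le)
    · simp [comp_C_mul_X_coeff]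
    · simp [aeval_comp, Algebra.smul_def]
  · rintro ⟨H, -, hH, rfl⟩
    rw [aeval_eq_sum_range]
    refine sum_mem fun i _ => ?_
    obtain ⟨c, hc⟩ := hH i
    rw [hc, mul_comm, mul_smul, ← _root_.smul_pow]
    exact Subalgebra.smul_mem _ (pow_mem (Algebra.self_mem_adjoin_singleton _ _) i) c

theorem pow_smul_mem_adjoin_smul {f : T[X]} (hf : f.Monic) {t : K} (ht : aeval t f = 0) (x : T)
    {b : K} (hb : b ∈ Algebra.adjoin T {t}) :
    x ^ (f.natDegree - 1) • b ∈ Algebra.adjoin T {x • t} := by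
  obtain ⟨H, hH, rfl⟩ := exists_natDegree_lt_aeval_eq hf ht hb
  refine (exists_pow_dvd_coeff_aeval_eq_iff hf ht x).2
    ⟨C (x ^ (f.natDegree - 1)) * H, (natDegree_C_mul_le _ _).trans_lt hH, fun i => ?_, by
      rw [map_mul, aeval_C, Algebra.smul_def]⟩
  rw [coeff_C_mul]
  obtain hi | hi := le_or_gt i (f.natDegree - 1)
  · exact (pow_dvd_pow x hi).mul_right _
  · rw [coeff_eq_zero_of_natDegree_lt (by omega), mul_zero]
    exact dvd_zero _

theorem pow_dvd_coeff_of_mul_mem_adjoin_smul {f : T[X]} (hf : f.Monic) {t : K} (ht : aeval t f = 0)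
    (hind : ∀ G : T[X], G.natDegree < f.natDegree → aeval t G = 0 → G = 0) {x : T} {H : T[X]}
    {d : ℕ} (hd : d < f.natDegree) (hH : H.natDegree ≤ d)
    (h : aeval t H * t ^ (f.natDegree - 1 - d) ∈ Algebra.adjoin T {x • t}) :
    x ^ (f.natDegree - 1) ∣ H.coeff d := by
  obtain ⟨G, hG, hdvd, heq⟩ := (exists_pow_dvd_coeff_aeval_eq_iff hf ht x).1 h
  have hlt : (H * X ^ (f.natDegree - 1 - d)).natDegree < f.natDegree :=
    (natDegree_mul_le.trans (add_le_add hH (natDegree_X_pow_le _))).trans_lt (by omega)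
  have hGH : G - H * X ^ (f.natDegree - 1 - d) = 0 :=
    hind _ ((natDegree_sub_le _ _).trans_lt (max_lt hG hlt)) (by simp [heq])
  have hcoeff := congrArg (coeff · (d + (f.natDegree - 1 - d))) (sub_eq_zero.1 hGH)
  simp only [coeff_mul_X_pow] at hcoeff
  rw [← hcoeff, show d + (f.natDegree - 1 - d) = f.natDegree - 1 by omega]
  exact hdvd _

theorem exists_aeval_eq_pow_smul_of_forall_mul_mem {f : T[X]} (hf : f.Monic) {t : K}
    (ht : aeval t f = 0) (hind : ∀ G : T[X], G.natDegree < f.natDegree → aeval t G = 0 → G = 0)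
    (x : T) {d : ℕ} (hd : d ≤ f.natDegree) (H : T[X]) (hH : H.degree < d)
    (h : ∀ b ∈ Algebra.adjoin T {t}, aeval t H * b ∈ Algebra.adjoin T {x • t}) :
    ∃ b ∈ Algebra.adjoin T {t}, aeval t H = x ^ (f.natDegree - 1) • b := by
  induction d generalizing H with
  | zero =>
    refine ⟨0, zero_mem _, ?_⟩
    simp [degree_eq_bot.1 (Nat.WithBot.lt_zero_iff.1 hH)]
  | succ d ih =>
    have htpow (k : ℕ) : t ^ k ∈ Algebra.adjoin T {t} :=
      pow_mem (Algebra.self_mem_adjoin_singleton T t) k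
    obtain ⟨c, hc⟩ := pow_dvd_coeff_of_mul_mem_adjoin_smul hf ht hind hd
      (natDegree_le_of_degree_le (Order.lt_succ_iff.1 hH)) (h _ (htpow _))
    have hsplit : aeval t H =
        x ^ (f.natDegree - 1) • c • t ^ d + aeval t (H - monomial d (H.coeff d)) := by
      simp [hc, Algebra.smul_def, mul_assoc]
    have hmem := Subalgebra.smul_mem _ (htpow d) c
    have hdeg : (H - monomial d (H.coeff d)).degree < d := by
      rw [degree_lt_iff_coeff_zero] at hH ⊢
      intro m hm
      obtain rfl | hm := hm.eq_or_lt
      · simp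
      · simp [coeff_monomial, hm.ne, hH m hm]
    obtain ⟨b, hb, hb'⟩ := ih (by omega) _ hdeg fun b hb => by
      rw [eq_sub_of_add_eq' hsplit.symm, sub_mul, smul_mul_assoc]
      exact sub_mem (h b hb) (pow_smul_mem_adjoin_smul hf ht x (mul_mem hmem hb))
    exact ⟨c • t ^ d + b, add_mem hmem hb, by rw [hsplit, hb', smul_add]⟩

theorem forall_mul_mem_adjoin_smul_iff {f : T[X]} (hf : f.Monic) {t : K} (ht : aeval t f = 0)
    (hind : ∀ G : T[X], G.natDegree < f.natDegree → aeval t G = 0 → G = 0) (x : T) {z : K} :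
    (∀ b ∈ Algebra.adjoin T {t}, z * b ∈ Algebra.adjoin T {x • t}) ↔
      ∃ b ∈ Algebra.adjoin T {t}, z = x ^ (f.natDegree - 1) • b := by
  refine ⟨fun h => ?_, fun ⟨b, hb, hz⟩ c hc => hz ▸ smul_mul_assoc (x ^ _) b c ▸
    pow_smul_mem_adjoin_smul hf ht x (mul_mem hb hc)⟩
  obtain ⟨H, hH, -, rfl⟩ :=
    (exists_pow_dvd_coeff_aeval_eq_iff hf ht x).1 (mul_one z ▸ h 1 (one_mem _))
  exact exists_aeval_eq_pow_smul_of_forall_mul_mem hf ht hind x le_rfl H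
    (degree_le_natDegree.trans_lt (by exact_mod_cast hH)) h

end Conductor

section Jacobson

open Polynomial IsLocalRing

variable {V B : Type*} [CommRing V] [CommRing B] [Algebra V B]

theorem map_maximalIdeal_le_jacobson_bot [IsLocalRing V] [Algebra.IsIntegral V B] :
    (maximalIdeal V).map (algebraMap V B) ≤ (⊥ : Ideal B).jacobson := by
  refine le_sInf fun M ⟨_, hM⟩ => Ideal.map_le_iff_le_comap.2 ?_
  have := Ideal.isMaximal_comap_of_isIntegral_of_isMaximal (R := V) M
  rw [eq_maximalIdeal this]

theorem mem_jacobson_bot_of_pow_mem {z : B} {n : ℕ} (h : z ^ n ∈ (⊥ : Ideal B).jacobson) :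
    z ∈ (⊥ : Ideal B).jacobson :=
  Ideal.isRadical_jacobson ⊥ ⟨n, h⟩

theorem mem_jacobson_bot_of_pow_eq_mul [IsLocalRing V] [Algebra.IsIntegral V B] {v : V}
    (hv : v ∈ maximalIdeal V) {z u : B} {n : ℕ} (h : z ^ n = algebraMap V B v * u) :
    z ∈ (⊥ : Ideal B).jacobson :=
  mem_jacobson_bot_of_pow_mem <| h ▸ Ideal.mul_mem_right _ _
    (map_maximalIdeal_le_jacobson_bot (Ideal.mem_map_of_mem _ hv))

theorem isUnit_add_of_mem_jacobson_bot {u z : B} (hu : IsUnit u)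
    (hz : z ∈ (⊥ : Ideal B).jacobson) : IsUnit (u + z) := by
  obtain ⟨u, rfl⟩ := hu
  have h := u.isUnit.mul (Ideal.mem_jacobson_bot.1 hz ↑u⁻¹)
  rwa [mul_add_one, mul_left_comm, u.mul_inv, mul_one, add_comm] at h

theorem exists_aeval_eq_add_mul (E : V[X]) (z : B) :
    ∃ w, aeval z E = algebraMap V B (E.coeff 0) + z * w :=
  ⟨aeval z E.divX, by
    conv_lhs => rw [← divX_mul_X_add E]
    rw [map_add, map_mul, aeval_X, aeval_C]
    ring⟩

theorem exists_aeval_eq_add_mul_add_sq_mul (E : V[X]) (z : B) : ∃ w, aeval z E =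
    algebraMap V B (E.coeff 0) + z * algebraMap V B (E.coeff 1) + z ^ 2 * w := by
  obtain ⟨w, hw⟩ := exists_aeval_eq_add_mul E.divX z
  refine ⟨w, ?_⟩
  conv_lhs => rw [← divX_mul_X_add E]
  rw [map_add, map_mul, aeval_X, aeval_C, hw, coeff_divX]
  ring

theorem isUnit_aeval_of_mem_jacobson_bot {E : V[X]} (hE : IsUnit (E.coeff 0)) {z : B}
    (hz : z ∈ (⊥ : Ideal B).jacobson) : IsUnit (aeval z E) := by
  obtain ⟨w, hw⟩ := exists_aeval_eq_add_mul E z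
  exact hw ▸ isUnit_add_of_mem_jacobson_bot (hE.map _) (Ideal.mul_mem_right _ _ hz)

theorem exists_mul_sub_pow_eq {p : ℕ} (hp : p.Prime) {E₁ E₂ : V[X]} {x t : B}
    (hx : x ^ 2 ∣ (p : B)) (ht : aeval x E₁ * t ^ p = aeval (x * t) E₂) {d : V}
    (hd : (p : V) ∣ E₁.coeff 0 * d ^ p - E₂.coeff 0) :
    ∃ w ∈ Ideal.span {x, t - algebraMap V B d},
      algebraMap V B (E₁.coeff 0) * (t - algebraMap V B d) ^ p =
        x * (algebraMap V B (E₂.coeff 1 * d - E₁.coeff 1 * d ^ p) + w) := by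
  obtain ⟨e₁, he₁⟩ := exists_aeval_eq_add_mul_add_sq_mul E₁ x
  obtain ⟨e₂, he₂⟩ := exists_aeval_eq_add_mul_add_sq_mul E₂ (x * t)
  obtain ⟨q, hq⟩ := hx
  obtain ⟨m, hm⟩ := hd
  obtain ⟨r, hr⟩ := exists_add_pow_prime_eq hp (t - algebraMap V B d) (algebraMap V B d)
  rw [sub_add_cancel] at hr
  replace hm := congrArg (algebraMap V B) hm
  simp only [map_sub, map_mul, map_pow, map_natCast] at hm ⊢
  rw [he₁, he₂] at ht
  generalize algebraMap V B (E₁.coeff 0) = a, algebraMap V B (E₂.coeff 0) = b,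
    algebraMap V B (E₁.coeff 1) = c₁, algebraMap V B (E₂.coeff 1) = c₂,
    algebraMap V B d = δ, algebraMap V B m = n at *
  obtain ⟨π, rfl⟩ : ∃ π, t = π + δ := ⟨t - δ, (sub_add_cancel t δ).symm⟩
  rw [add_sub_cancel_right] at *
  have hπ : π ^ p = π * π ^ (p - 1) := (mul_pow_sub_one hp.ne_zero π).symm
  refine ⟨((π + δ) ^ 2 * e₂ - e₁ * (π + δ) ^ p - q * n - (a + c₁ * x) * q * π * δ * r) * x +
    (c₂ - c₁ * π ^ (p - 1)) * π, Ideal.mem_span_pair.2 ⟨_, _, rfl⟩, ?_⟩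
  linear_combination ht - (a + c₁ * x) * hr - hm - (n + (a + c₁ * x) * π * δ * r) * hq -
    x * c₁ * hπ

end Jacobson

section ValuationRing

open Polynomial IsLocalRing

theorem isIntegrallyClosed_of_forall_dvd_or_isUnit {B : Type*} [CommRing B] [IsDomain B]
    [IsNoetherianRing B] {π : B} (hπ : ¬IsUnit π) (h : ∀ z, π ∣ z ∨ IsUnit z) :
    IsIntegrallyClosed B := by
  have nonunit_iff (z : B) : ¬IsUnit z ↔ π ∣ z :=
    ⟨(h z).resolve_right, fun hz hu => hπ (isUnit_of_dvd_unit hz hu)⟩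
  have : IsLocalRing B := .of_nonunits_add fun y z hy hz => by
    rw [mem_nonunits_iff, nonunit_iff] at *
    exact dvd_add hy hz
  have hprin : (maximalIdeal B).IsPrincipal :=
    ⟨π, Ideal.ext fun z => by rw [mem_maximalIdeal, mem_nonunits_iff, nonunit_iff,
      Ideal.submodule_span_eq, Ideal.mem_span_singleton]⟩
  have : IsPrincipalIdealRing B :=
    ((tfae_of_isNoetherianRing_of_isLocalRing_of_isDomain B).out 4 0).1 hprin
  infer_instance

variable {V B : Type*} [CommRing V] [IsLocalRing V] [CommRing B] [Algebra V B]

theorem dvd_or_isUnit_of_irreducible_map_residue {x t π : B}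
    (htop : Algebra.adjoin V {x, t} = ⊤) (hjac : π ∈ (⊥ : Ideal B).jacobson)
    (hmax : ∀ v ∈ maximalIdeal V, π ∣ algebraMap V B v) (hx : π ∣ x) {F : V[X]}
    (hF : Irreducible (F.map (residue V))) (ht : π ∣ aeval t F) (z : B) : π ∣ z ∨ IsUnit z := by
  let I : Ideal B := Ideal.span {π}
  have mk_eq_zero (w : B) : Ideal.Quotient.mk I w = 0 ↔ π ∣ w := by
    rw [Ideal.Quotient.eq_zero_iff_mem, Ideal.mem_span_singleton]
  let ψ : ResidueField V →+* B ⧸ I :=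
    Ideal.Quotient.lift _ ((Ideal.Quotient.mk I).comp (algebraMap V B)) fun v hv =>
      (mk_eq_zero _).2 (hmax v hv)
  have hroot : (F.map (residue V)).eval₂ ψ (Ideal.Quotient.mk I t) = 0 := by
    rw [eval₂_map, show ψ.comp (residue V) = (Ideal.Quotient.mk I).comp (algebraMap V B) from rfl,
      ← hom_eval₂]
    exact (mk_eq_zero _).2 ht
  let φ : AdjoinRoot (F.map (residue V)) →+* B ⧸ I := AdjoinRoot.lift ψ _ hroot
  have hsurj (w : B) : Ideal.Quotient.mk I w ∈ φ.range := by
    have hw : w ∈ Algebra.adjoin V {x, t} := htop ▸ Algebra.mem_top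
    induction hw using Algebra.adjoin_induction with
    | mem w hw =>
      obtain rfl | rfl := hw
      · exact (mk_eq_zero w).2 hx ▸ zero_mem _
      · exact ⟨AdjoinRoot.root _, AdjoinRoot.lift_root hroot⟩
    | algebraMap v => exact ⟨AdjoinRoot.of _ (residue V v), AdjoinRoot.lift_of hroot⟩
    | add w w' _ _ hw hw' => exact map_add (Ideal.Quotient.mk I) w w' ▸ add_mem hw hw'
    | mul w w' _ _ hw hw' => exact map_mul (Ideal.Quotient.mk I) w w' ▸ mul_mem hw hw'
  have := Fact.mk hF
  obtain ⟨y, hy⟩ := hsurj z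
  obtain rfl | hy0 := eq_or_ne y 0
  · exact .inl ((mk_eq_zero z).1 (hy ▸ map_zero φ))
  · have := isLocalHom_of_le_jacobson_bot I ((Ideal.span_singleton_le_iff_mem _).2 hjac)
    exact .inr (isUnit_of_map_unit (Ideal.Quotient.mk I) z (hy ▸ hy0.isUnit.map φ))

variable {p : ℕ} {E₁ E₂ : V[X]} {x t : B}

theorem forall_dvd_or_isUnit_of_coeff_mul_pow_sub_mem (hp : p.Prime)
    (hmax : maximalIdeal V = Ideal.span {(p : V)}) (ha : IsUnit (E₁.coeff 0))
    (htop : Algebra.adjoin V {x, t} = ⊤) (hx : x ^ 2 ∣ (p : B)) (hxjac : x ∈ (⊥ : Ideal B).jacobson)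
    (ht : aeval x E₁ * t ^ p = aeval (x * t) E₂) {d : V}
    (hd : E₁.coeff 0 * d ^ p - E₂.coeff 0 ∈ maximalIdeal V)
    (hunit : IsUnit (E₂.coeff 1 * d - E₁.coeff 1 * d ^ p)) :
    t - algebraMap V B d ∈ (⊥ : Ideal B).jacobson ∧
      ∀ z, t - algebraMap V B d ∣ z ∨ IsUnit z := by
  obtain ⟨w, hw, heq⟩ := exists_mul_sub_pow_eq hp hx ht (Ideal.mem_span_singleton.1 (hmax ▸ hd))
  have hπjac : t - algebraMap V B d ∈ (⊥ : Ideal B).jacobson := by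
    refine mem_jacobson_bot_of_pow_mem (n := p) ?_
    rw [← Ideal.unit_mul_mem_iff_mem _ (ha.map (algebraMap V B)), heq]
    exact Ideal.mul_mem_right _ _ hxjac
  have hwjac : w ∈ (⊥ : Ideal B).jacobson :=
    (Ideal.span_le.2 (Set.pair_subset hxjac hπjac)) hw
  have hπx : t - algebraMap V B d ∣ x := by
    rw [← (isUnit_add_of_mem_jacobson_bot (hunit.map (algebraMap V B)) hwjac).dvd_mul_right, ← heq]
    exact (dvd_pow_self _ hp.ne_zero).mul_left _
  refine ⟨hπjac, dvd_or_isUnit_of_irreducible_map_residue htop hπjac (fun v hv => ?_) hπx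
    (F := X - C d) ?_ (by simp)⟩
  · obtain ⟨c, rfl⟩ := Ideal.mem_span_singleton.1 (hmax ▸ hv)
    rw [map_mul, map_natCast]
    exact ((hπx.trans (dvd_pow_self x two_ne_zero)).trans hx).mul_right _
  · simpa using irreducible_X_sub_C (residue V d)

theorem forall_dvd_or_isUnit_of_coeff_mul_pow_sub_notMem (hp : p.Prime)
    (hmax : maximalIdeal V = Ideal.span {(p : V)}) (ha : IsUnit (E₁.coeff 0))
    (htop : Algebra.adjoin V {x, t} = ⊤) (hx : x ∣ (p : B)) (hxjac : x ∈ (⊥ : Ideal B).jacobson)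
    (ht : aeval x E₁ * t ^ p = aeval (x * t) E₂)
    (hd : ∀ d : V, E₁.coeff 0 * d ^ p - E₂.coeff 0 ∉ maximalIdeal V) (z : B) :
    x ∣ z ∨ IsUnit z := by
  have ha' : residue V (E₁.coeff 0) ≠ 0 := (residue_ne_zero_iff_isUnit _).2 ha
  refine dvd_or_isUnit_of_irreducible_map_residue htop hxjac (fun v hv => ?_) dvd_rfl
    (F := C (E₁.coeff 0) * X ^ p - C (E₂.coeff 0)) ?_ ?_ z
  · obtain ⟨c, rfl⟩ := Ideal.mem_span_singleton.1 (hmax ▸ hv)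
    rw [map_mul, map_natCast]
    exact hx.mul_right _
  · have hirr : Irreducible (X ^ p - C (residue V (E₂.coeff 0) / residue V (E₁.coeff 0))) := by
      refine X_pow_sub_C_irreducible_of_prime hp fun c hc => ?_
      obtain ⟨d, rfl⟩ := residue_surjective c
      rw [eq_div_iff ha', mul_comm] at hc
      exact hd d ((residue_eq_zero_iff _).1 (by simp [hc]))
    convert (irreducible_isUnit_mul (isUnit_C.2 ha'.isUnit)).2 hirr using 1
    rw [mul_sub, ← C_mul, mul_div_cancel₀ _ ha']
    simp
  · obtain ⟨w₁, hw₁⟩ := exists_aeval_eq_add_mul E₁ x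
    obtain ⟨w₂, hw₂⟩ := exists_aeval_eq_add_mul E₂ (x * t)
    rw [hw₁, hw₂] at ht
    refine ⟨t * w₂ - w₁ * t ^ p, ?_⟩
    simp only [map_sub, map_mul, map_pow, aeval_X, aeval_C]
    linear_combination ht

theorem isIntegrallyClosed_of_isUnit_coeff [Algebra.IsIntegral V B] [IsDomain B]
    [IsNoetherianRing B] (hp : p.Prime) (hmax : maximalIdeal V = Ideal.span {(p : V)})
    (ha : IsUnit (E₁.coeff 0)) (htop : Algebra.adjoin V {x, t} = ⊤) (hx : x ^ p = p * aeval x E₁)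
    (ht : aeval x E₁ * t ^ p = aeval (x * t) E₂)
    (hd : ∀ d : V, E₁.coeff 0 * d ^ p - E₂.coeff 0 ∈ maximalIdeal V →
      IsUnit (E₂.coeff 1 * d - E₁.coeff 1 * d ^ p)) : IsIntegrallyClosed B := by
  have hxjac : x ∈ (⊥ : Ideal B).jacobson := mem_jacobson_bot_of_pow_eq_mul
    (hmax ▸ Ideal.mem_span_singleton_self (p : V)) (by rwa [map_natCast])
  have hx2 : x ^ 2 ∣ (p : B) :=
    (isUnit_aeval_of_mem_jacobson_bot ha hxjac).dvd_mul_right.1 (hx ▸ pow_dvd_pow x hp.two_le)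
  obtain ⟨π, hπ, h⟩ : ∃ π ∈ (⊥ : Ideal B).jacobson, ∀ z, π ∣ z ∨ IsUnit z := by
    by_cases hroot : ∃ d : V, E₁.coeff 0 * d ^ p - E₂.coeff 0 ∈ maximalIdeal V
    · obtain ⟨d, hroot⟩ := hroot
      exact ⟨_, forall_dvd_or_isUnit_of_coeff_mul_pow_sub_mem hp hmax ha htop hx2 hxjac ht hroot
        (hd d hroot)⟩
    · exact ⟨x, hxjac, forall_dvd_or_isUnit_of_coeff_mul_pow_sub_notMem hp hmax ha htop
        ((dvd_pow_self x two_ne_zero).trans hx2) hxjac ht (not_exists.1 hroot)⟩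
  refine isIntegrallyClosed_of_forall_dvd_or_isUnit (fun hu => ?_) h
  simpa using Ideal.mem_jacobson_bot.1 hπ (-hu.unit⁻¹)

end ValuationRing

section LocalNormalization

open Polynomial IsLocalRing

variable {V K : Type*} [CommRing V] [CommRing K] [Algebra V K] {p : ℕ}
  {E E₁ E₂ : V[X]} {x t : K}

theorem exists_monic_of_pow_eq_aeval [Nontrivial V] (hE : E.natDegree < p)
    (hx : x ^ p = aeval x E) : ∃ q : V[X], q.Monic ∧ q.natDegree = p ∧ aeval x q = 0 := by
  have hdeg : E.degree < p := degree_le_natDegree.trans_lt (by exact_mod_cast hE)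
  refine ⟨X ^ p - E, monic_X_pow_sub hdeg, ?_, by simp [hx]⟩
  rw [natDegree_sub_eq_left_of_natDegree_lt (by rwa [natDegree_X_pow]), natDegree_X_pow]

theorem isIntegral_of_pow_eq_mul_aeval [Nontrivial K] (hE : E.natDegree < p)
    (hx : x ^ p = p * aeval x E) : IsIntegral V x := by
  have := (algebraMap V K).domain_nontrivial
  obtain ⟨q, hq, -, hq0⟩ := exists_monic_of_pow_eq_aeval (x := x) (E := C (p : V) * E)
    ((natDegree_C_mul_le _ _).trans_lt hE) (by simp [hx])
  exact ⟨q, hq, hq0⟩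

theorem exists_mem_adjoin_mul_aeval_eq_one [IsLocalRing V] [Nontrivial K]
    (hpV : (p : V) ∈ maximalIdeal V) (ha : IsUnit (E.coeff 0)) (hE : E.natDegree < p)
    (hx : x ^ p = p * aeval x E) : ∃ c ∈ Algebra.adjoin V {x}, c * aeval x E = 1 := by
  have : Algebra.IsIntegral V (Algebra.adjoin V {x}) :=
    Algebra.IsIntegral.adjoin (by simpa using isIntegral_of_pow_eq_mul_aeval hE hx)
  let ξ : Algebra.adjoin V {x} := ⟨x, Algebra.self_mem_adjoin_singleton V x⟩
  have hξ : ξ ^ p = algebraMap V _ (p : V) * aeval ξ E := Subtype.ext <| by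
    rw [map_natCast, MulMemClass.coe_mul, ← Subalgebra.aeval_coe]
    exact hx
  obtain ⟨c, hc⟩ := (isUnit_aeval_of_mem_jacobson_bot ha
    (mem_jacobson_bot_of_pow_eq_mul hpV hξ)).exists_left_inv
  exact ⟨c, c.2, by simpa [← Subalgebra.aeval_coe, ξ] using congrArg Subtype.val hc⟩

theorem exists_monic_adjoin_of_mul_pow_eq_aeval [Nontrivial K] {c : K}
    (hc : c ∈ Algebra.adjoin V {x}) (hcE : c * aeval x E₁ = 1) (hE₂ : E₂.natDegree < p)
    (ht : aeval x E₁ * t ^ p = aeval (x * t) E₂) :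
    ∃ q : (Algebra.adjoin V {x})[X], q.Monic ∧ q.natDegree = p ∧ aeval t q = 0 := by
  let ξ : Algebra.adjoin V {x} := ⟨x, Algebra.self_mem_adjoin_singleton V x⟩
  refine exists_monic_of_pow_eq_aeval
    (E := C ⟨c, hc⟩ * (E₂.map (algebraMap V (Algebra.adjoin V {x}))).comp (C ξ * X)) ?_ ?_
  · refine ((natDegree_C_mul_le _ _).trans (natDegree_comp_le.trans ?_)).trans_lt hE₂
    exact (Nat.mul_le_mul natDegree_map_le ((natDegree_C_mul_le _ _).trans natDegree_X_le)).trans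
      (mul_one _).le
  · have hcoe (z : Algebra.adjoin V {x}) : algebraMap (Algebra.adjoin V {x}) K z = z := rfl
    rw [map_mul, aeval_C, aeval_comp, map_mul, aeval_C, aeval_X, aeval_map_algebraMap, hcoe, hcoe,
      ← ht, ← mul_assoc, hcE, one_mul]

theorem finite_adjoin_pair {q : (Algebra.adjoin V {x})[X]} (hx : IsIntegral V x) (hq : q.Monic)
    (ht : aeval t q = 0) : Module.Finite V (Algebra.adjoin V {x, t}) := by
  have : Algebra.IsIntegral V (Algebra.adjoin V {x}) := Algebra.IsIntegral.adjoin (by simpa)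
  have ht' : IsIntegral V t := isIntegral_trans (A := Algebra.adjoin V {x}) t ⟨q, hq, ht⟩
  exact Module.Finite.iff_fg.2
    (fg_adjoin_of_finite (Set.toFinite _) (by simpa using ⟨hx, ht'⟩))

theorem isIntegrallyClosed_adjoin_pair_of_isUnit_coeff [IsDomain K] [IsLocalRing V]
    [IsNoetherianRing V] [Module.Finite V (Algebra.adjoin V {x, t})] (hp : p.Prime)
    (hmax : maximalIdeal V = Ideal.span {(p : V)}) (ha : IsUnit (E₁.coeff 0))
    (hx : x ^ p = p * aeval x E₁) (ht : aeval x E₁ * t ^ p = aeval (x * t) E₂)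
    (hd : ∀ d : V, E₁.coeff 0 * d ^ p - E₂.coeff 0 ∈ maximalIdeal V →
      IsUnit (E₂.coeff 1 * d - E₁.coeff 1 * d ^ p)) :
    IsIntegrallyClosed (Algebra.adjoin V {x, t}) := by
  let ξ : Algebra.adjoin V {x, t} := ⟨x, Algebra.subset_adjoin (by simp)⟩
  let τ : Algebra.adjoin V {x, t} := ⟨t, Algebra.subset_adjoin (by simp)⟩
  have htop : Algebra.adjoin V {ξ, τ} = ⊤ := by
    rw [← Algebra.adjoin_adjoin_coe_preimage (R := V) (s := {x, t})]
    congr 1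
    ext z
    simp [ξ, τ, Subtype.ext_iff]
  have : IsNoetherianRing (Algebra.adjoin V {x, t}) := IsNoetherianRing.of_finite V _
  refine isIntegrallyClosed_of_isUnit_coeff (x := ξ) (t := τ) hp hmax ha htop ?_ ?_ hd <;>
    refine Subtype.ext ?_
  · simpa [← Subalgebra.aeval_coe, ξ] using hx
  · simpa [← Subalgebra.aeval_coe, ξ, τ] using ht

theorem forall_mul_mem_adjoin_pair_iff [Nontrivial K] {q : (Algebra.adjoin V {x})[X]} (hq : q.Monic)
    (ht : aeval t q = 0)
    (hind : ∀ G : (Algebra.adjoin V {x})[X], G.natDegree < q.natDegree → aeval t G = 0 → G = 0)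
    {z : K} : (∀ b ∈ Algebra.adjoin V {x, t}, z * b ∈ Algebra.adjoin V {x, x * t}) ↔
      ∃ b ∈ Algebra.adjoin V {x, t}, z = x ^ (q.natDegree - 1) * b := by
  have mem_adjoin (s z : K) : z ∈ Algebra.adjoin V {x, s} ↔
      z ∈ Algebra.adjoin (Algebra.adjoin V {x}) {s} := by
    rw [Set.insert_eq, Algebra.adjoin_union_eq_adjoin_adjoin, Subalgebra.mem_restrictScalars]
  simp only [mem_adjoin]
  exact forall_mul_mem_adjoin_smul_iff hq ht hind ⟨x, Algebra.self_mem_adjoin_singleton V x⟩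

theorem pow_mul_mem_span_of_mem_adjoin_pair [Nontrivial K] {q : (Algebra.adjoin V {x})[X]}
    (hq : q.Monic) (ht : aeval t q = 0) {b : K} (hb : b ∈ Algebra.adjoin V {x, t}) :
    x ^ (q.natDegree - 1) * b ∈ Submodule.span V
      {z | ∃ i j, q.natDegree - 1 ≤ i + j ∧ x ^ i * (x * t) ^ j = z} := by
  rw [Set.insert_eq, Algebra.adjoin_union_eq_adjoin_adjoin, Subalgebra.mem_restrictScalars] at hb
  obtain ⟨G, hG, rfl⟩ := exists_natDegree_lt_aeval_eq hq ht hb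
  rw [aeval_eq_sum_range, Finset.mul_sum]
  refine sum_mem fun j hj => ?_
  have hjq : j ≤ q.natDegree - 1 := by grind
  obtain ⟨H, hH⟩ := (Algebra.adjoin_singleton_eq_range_aeval V x).le (G.coeff j).2
  replace hH : aeval x H = G.coeff j := hH
  rw [Subalgebra.smul_def, ← hH, smul_eq_mul, aeval_eq_sum_range, Finset.sum_mul, Finset.mul_sum]
  refine sum_mem fun i _ => ?_
  rw [smul_mul_assoc, mul_smul_comm]
  refine Submodule.smul_mem _ _ (Submodule.subset_span ⟨q.natDegree - 1 - j + i, j, by omega, ?_⟩)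
  rw [pow_add, mul_pow, ← pow_sub_mul_pow x hjq]
  ring

end LocalNormalization

section PowerBasis

open Polynomial IntermediateField

attribute [local instance] algebraAdjoinSimple

theorem eq_zero_of_aeval_eq_zero_of_finrank_eq_mul {V L K : Type*} [CommRing V] [Field L]
    [Field K] [Algebra V K] [Algebra V L] [Algebra L K] [IsScalarTower V L K]
    [FiniteDimensional L K] {x t : K}
    (htop : Algebra.adjoin L ({x, t} : Set K) = ⊤) {q₁ : V[X]} (hq₁ : q₁.Monic)
    (hx : aeval x q₁ = 0) {q₂ : (Algebra.adjoin V {x})[X]} (hq₂ : q₂.Monic) (ht : aeval t q₂ = 0)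
    (hdeg : Module.finrank L K = q₁.natDegree * q₂.natDegree) {G : (Algebra.adjoin V {x})[X]}
    (hG : G.natDegree < q₂.natDegree) (hG0 : aeval t G = 0) : G = 0 := by
  have hmin := (minpoly_eq_of_finrank_eq_mul htop (hq₁.map (algebraMap V L))
    (by rwa [aeval_map_algebraMap]) (hq₂.map (algebraMap (Algebra.adjoin V {x}) L⟮x⟯))
    (by rwa [aeval_map_algebraMap]) (by rw [hq₁.natDegree_map, hq₂.natDegree_map, hdeg])).2
  exact eq_zero_of_aeval_eq_zero_of_natDegree_lt (F := L⟮x⟯) hG0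
    (by rwa [hmin, hq₂.natDegree_map])

end PowerBasis

section ResidueCondition

open IsLocalRing

variable {S V : Type*} [CommRing S] [CommRing V] [IsLocalRing V] [Algebra S V] {p : ℕ}
  [(Ideal.span {(p : S)}).IsPrime] [IsLocalization.AtPrime V (Ideal.span {(p : S)})]

theorem residue_algebraMap_eq_zero_iff {s : S} :
    residue V (algebraMap S V s) = 0 ↔ (p : S) ∣ s := by
  rw [residue_eq_zero_iff,
    IsLocalization.AtPrime.to_map_mem_maximal_iff V (Ideal.span {(p : S)}),
    Ideal.mem_span_singleton]

theorem isUnit_algebraMap_iff_not_dvd {s : S} : IsUnit (algebraMap S V s) ↔ ¬(p : S) ∣ s := by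
  rw [← residue_ne_zero_iff_isUnit, Ne, residue_algebraMap_eq_zero_iff (p := p)]

theorem isUnit_mul_sub_mul_pow_of_mem_maximalIdeal (hp : p.Prime) {h₁ h₂ a b : S}
    (hb : ¬(p : S) ∣ b) (hh₂ : ¬(p : S) ∣ h₂)
    (hi : ∀ i : ℕ, 1 ≤ i → i ≤ p - 1 → ¬(p : S) ∣ a * h₂ ^ p + i * b * h₁ ^ p) {d : V}
    (hd : algebraMap S V a * d ^ p - algebraMap S V b ∈ maximalIdeal V) :
    IsUnit (algebraMap S V (-h₂ ^ (p - 1)) * d - algebraMap S V (-h₁ ^ (p - 1)) * d ^ p) := by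
  by_contra hnu
  let φ : S →+* ResidueField V := (residue V).comp (algebraMap S V)
  have hφ {s : S} : φ s = 0 ↔ (p : S) ∣ s := residue_algebraMap_eq_zero_iff
  have := Fact.mk hp
  have : CharP (ResidueField V) p :=
    (CharP.charP_iff_prime_eq_zero hp).2 (by simpa using hφ.2 (dvd_refl (p : S)))
  have hd' : φ a * residue V d ^ p - φ b = 0 := (residue_eq_zero_iff _).2 hd
  have hnu' := (residue_eq_zero_iff _).2 ((mem_maximalIdeal _).2 hnu)
  simp only [map_sub, map_mul, map_neg, map_pow] at hnu'
  obtain ⟨i, hi₁, hip, hzero⟩ := exists_natCast_add_eq_zero (p := p) (h₁ := φ h₁) (h₂ := φ h₂)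
    (hφ.not.2 hb) (hφ.not.2 hh₂) (sub_eq_zero.1 hd')
    (by simp only [φ, RingHom.comp_apply]; linear_combination hnu')
  exact hi i hi₁ hip (hφ.1 (by simpa using hzero))

end ResidueCondition

section SymbolicPower

theorem symbPow_eq_comap_span_pow {A B : Type*} [CommRing A] [CommRing B] (φ : A →+* B)
    {P : Ideal A} (hP : P.IsPrime) {x : B} {n : ℕ} (hle : P.map φ ≤ Ideal.span {x})
    (hunit : ∀ s ∉ P, IsUnit (φ s)) (hn : ∀ z, φ z ∈ Ideal.span {x ^ n} → ∃ s ∉ P, s * z ∈ P ^ n) :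
    symbPow P hP n = (Ideal.span {x ^ n}).comap φ := by
  have hlen : (P ^ n).map φ ≤ Ideal.span {x ^ n} := by
    rw [Ideal.map_pow, ← Ideal.span_singleton_pow]
    exact Ideal.pow_right_mono hle n
  ext z
  rw [symbPow, Ideal.mem_comap, IsLocalization.algebraMap_mem_map_algebraMap_iff P.primeCompl]
  refine ⟨fun ⟨s, hs, hsz⟩ => ?_, hn z⟩
  have hmem := hlen (Ideal.mem_map_of_mem φ hsz)
  rwa [map_mul, Ideal.unit_mul_mem_iff_mem _ (hunit s hs)] at hmem

variable {S K : Type*} [CommRing S] [Field K] [Algebra S K] {p : ℕ} {ω μ : K} {h₁ h₂ : S}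

theorem exists_sub_algebraMap_mem_Pid (z : Algebra.adjoin S ({ω, μ} : Set K)) :
    ∃ s : S, z - algebraMap S _ s ∈ Pid p ω μ h₁ h₂ := by
  simp_rw [← Ideal.Quotient.eq]
  obtain ⟨z, hz⟩ := z
  induction hz using Algebra.adjoin_induction with
  | mem z hz =>
    obtain rfl | rfl := hz
    · exact ⟨h₁, Ideal.Quotient.eq.2 (Ideal.subset_span (.inr (.inl rfl)))⟩
    · exact ⟨h₂, Ideal.Quotient.eq.2 (Ideal.subset_span (.inr (.inr rfl)))⟩
  | algebraMap s => exact ⟨s, rfl⟩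
  | add y z _ _ hy hz =>
    obtain ⟨s, hs⟩ := hy
    obtain ⟨s', hs'⟩ := hz
    exact ⟨s + s', by rw [map_add, map_add, ← hs, ← hs', ← map_add]; rfl⟩
  | mul y z _ _ hy hz =>
    obtain ⟨s, hs⟩ := hy
    obtain ⟨s', hs'⟩ := hz
    exact ⟨s * s', by rw [map_mul, map_mul, ← hs, ← hs', ← map_mul]; rfl⟩

theorem span_le_map_pow_Pid (n : ℕ) :
    Submodule.span S {z | ∃ i j, n ≤ i + j ∧
      (ω - algebraMap S K h₁) ^ i * (μ - algebraMap S K h₂) ^ j = z} ≤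
    ((Pid p ω μ h₁ h₂ ^ n).restrictScalars S).map (Algebra.adjoin S {ω, μ}).val.toLinearMap := by
  refine Submodule.span_le.2 ?_
  rintro _ ⟨i, j, hij, rfl⟩
  refine ⟨(omegaA ω μ - algebraMap S _ h₁) ^ i * (muA ω μ - algebraMap S _ h₂) ^ j,
    Ideal.pow_le_pow_right hij ?_, rfl⟩
  rw [pow_add]
  exact Ideal.mul_mem_mul (Ideal.pow_mem_pow (Ideal.subset_span (.inr (.inl rfl))) i)
    (Ideal.pow_mem_pow (Ideal.subset_span (.inr (.inr rfl))) j)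

variable {B : Type*} [CommRing B] [Algebra S B] (φ : Algebra.adjoin S ({ω, μ} : Set K) →ₐ[S] B)
  {x t : B}

theorem map_Pid_le_span (hω : φ (omegaA ω μ) - algebraMap S B h₁ = x)
    (hμ : φ (muA ω μ) - algebraMap S B h₂ = x * t) (hxp : x ∣ (p : B)) :
    (Pid p ω μ h₁ h₂).map φ ≤ Ideal.span {x} := by
  rw [Pid, Ideal.map_span, Ideal.span_le]
  simp [Set.image_insert_eq, Set.insert_subset_iff, Ideal.mem_span_singleton, hω, hμ, hxp]

theorem isUnit_map_of_notMem_Pid (hS : ∀ s : S, ¬(p : S) ∣ s → IsUnit (algebraMap S B s))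
    (hle : (Pid p ω μ h₁ h₂).map φ ≤ (⊥ : Ideal B).jacobson)
    {z : Algebra.adjoin S ({ω, μ} : Set K)} (hz : z ∉ Pid p ω μ h₁ h₂) : IsUnit (φ z) := by
  obtain ⟨s, hs⟩ := exists_sub_algebraMap_mem_Pid (p := p) (h₁ := h₁) (h₂ := h₂) z
  have hps : ¬(p : S) ∣ s := by
    rintro ⟨c, rfl⟩
    rw [map_mul, map_natCast] at hs
    exact hz ((Submodule.sub_mem_iff_left _
      (Ideal.mul_mem_right _ _ (Ideal.subset_span (.inl rfl)))).1 hs)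
  have hunit := isUnit_add_of_mem_jacobson_bot (hS s hps) (hle (Ideal.mem_map_of_mem φ hs))
  rwa [map_sub, AlgHom.commutes, add_sub_cancel] at hunit

theorem algebraMap_notMem_Pid [Nontrivial B] {s : S} (hs : IsUnit (algebraMap S B s))
    (hle : (Pid p ω μ h₁ h₂).map φ ≤ (⊥ : Ideal B).jacobson) :
    algebraMap S _ s ∉ Pid p ω μ h₁ h₂ := fun hmem => by
  have hjac := hle (Ideal.mem_map_of_mem φ hmem)
  rw [AlgHom.commutes] at hjac
  exact bot_ne_top (Ideal.jacobson_eq_top_iff.1 (Ideal.eq_top_of_isUnit_mem _ hjac hs))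

theorem mem_symbPow_Pid_iff_pow_dvd [Nontrivial B]
    (hS : ∀ s : S, ¬(p : S) ∣ s → IsUnit (algebraMap S B s))
    (hω : φ (omegaA ω μ) - algebraMap S B h₁ = x) (hμ : φ (muA ω μ) - algebraMap S B h₂ = x * t)
    (hxp : x ∣ (p : B)) (hx : x ∈ (⊥ : Ideal B).jacobson) (hP : (Pid p ω μ h₁ h₂).IsPrime) {n : ℕ}
    (hn : ∀ z, x ^ n ∣ φ z →
      ∃ u : S, ¬(p : S) ∣ u ∧ algebraMap S _ u * z ∈ Pid p ω μ h₁ h₂ ^ n)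
    {z : Algebra.adjoin S ({ω, μ} : Set K)} :
    z ∈ symbPow (Pid p ω μ h₁ h₂) hP n ↔ x ^ n ∣ φ z := by
  have hle := map_Pid_le_span φ hω hμ hxp
  have hlejac := hle.trans ((Ideal.span_singleton_le_iff_mem _).2 hx)
  have hunit {s} (hs : s ∉ Pid p ω μ h₁ h₂) := isUnit_map_of_notMem_Pid φ hS hlejac hs
  have key := symbPow_eq_comap_span_pow (φ : Algebra.adjoin S {ω, μ} →+* B) hP hle
    (fun _ hs => hunit hs) (n := n) fun z hz => by
      obtain ⟨u, hu, hmem⟩ := hn z (Ideal.mem_span_singleton.1 hz)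
      exact ⟨_, algebraMap_notMem_Pid φ (hS u hu) hlejac, hmem⟩
  rw [key]
  exact Ideal.mem_span_singleton

end SymbolicPower

section Localization

open Polynomial IsLocalRing

variable {S V K : Type*} [CommRing S] [CommRing V] [Algebra S V] [Field K]
  [Algebra S K] [Algebra V K] [IsScalarTower S V K] {p : ℕ} [(Ideal.span {(p : S)}).IsPrime]
  [IsLocalization.AtPrime V (Ideal.span {(p : S)})] {ω μ x y t : K} {h₁ h₂ : S}

theorem exists_algebraMap_mul_mem_pow_Pid (hω : ω - algebraMap S K h₁ = x)
    (hμ : μ - algebraMap S K h₂ = y) {n : ℕ} {z : Algebra.adjoin S ({ω, μ} : Set K)}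
    (hz : (z : K) ∈ Submodule.span V {z | ∃ i j, n ≤ i + j ∧ x ^ i * y ^ j = z}) :
    ∃ u : S, ¬(p : S) ∣ u ∧ algebraMap S _ u * z ∈ Pid p ω μ h₁ h₂ ^ n := by
  subst hω hμ
  obtain ⟨u, hu⟩ := multiple_mem_span_of_mem_localization_span
    (Ideal.span {(p : S)}).primeCompl V _ _ hz
  obtain ⟨w, hw, hwu⟩ := span_le_map_pow_Pid (p := p) n hu
  refine ⟨u, fun h => u.2 (Ideal.mem_span_singleton.2 h), ?_⟩
  rwa [← Algebra.smul_def, ← show w = (u : S) • z from Subtype.ext hwu]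

theorem mem_symbPow_Pid_iff [IsLocalRing V] {q : (Algebra.adjoin V {x})[X]} (hp : p ≠ 0)
    (hω : ω - algebraMap S K h₁ = x) (hμ : μ - algebraMap S K h₂ = x * t)
    [Algebra.IsIntegral V (Algebra.adjoin V {x, t})] {E : V[X]} (hE : IsUnit (E.coeff 0))
    (hx : x ^ p = p * aeval x E) (hq : q.Monic) (ht : aeval t q = 0)
    (hP : (Pid p ω μ h₁ h₂).IsPrime) {z : Algebra.adjoin S ({ω, μ} : Set K)} :
    z ∈ symbPow (Pid p ω μ h₁ h₂) hP (q.natDegree - 1) ↔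
      ∃ b ∈ Algebra.adjoin V {x, t}, (z : K) = x ^ (q.natDegree - 1) * b := by
  let B := Algebra.adjoin V {x, t}
  let ξ : B := ⟨x, Algebra.subset_adjoin (by simp)⟩
  let τ : B := ⟨t, Algebra.subset_adjoin (by simp)⟩
  have hAB : Algebra.adjoin S {ω, μ} ≤ B.restrictScalars S := by
    refine Algebra.adjoin_le (Set.pair_subset ?_ ?_)
    · exact eq_add_of_sub_eq hω ▸ add_mem ξ.2 ((B.restrictScalars S).algebraMap_mem h₁)
    · exact eq_add_of_sub_eq hμ ▸ add_mem (ξ * τ).2 ((B.restrictScalars S).algebraMap_mem h₂)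
  let φ : Algebra.adjoin S {ω, μ} →ₐ[S] B := Subalgebra.inclusion hAB
  have hS (s : S) (hs : ¬(p : S) ∣ s) : IsUnit (algebraMap S B s) :=
    IsScalarTower.algebraMap_apply S V B s ▸ (isUnit_algebraMap_iff_not_dvd.2 hs).map _
  have hpV : (p : V) ∈ maximalIdeal V := (residue_eq_zero_iff _).1 <| by
    simpa using (residue_algebraMap_eq_zero_iff (V := V)).2 (dvd_refl (p : S))
  have hξ : ξ ^ p = algebraMap V B (p : V) * aeval ξ E :=
    Subtype.ext (by simpa [← Subalgebra.aeval_coe, ξ] using hx)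
  have hjac : ξ ∈ (⊥ : Ideal B).jacobson := mem_jacobson_bot_of_pow_eq_mul hpV hξ
  have hξp : ξ ∣ (p : B) := (isUnit_aeval_of_mem_jacobson_bot hE hjac).dvd_mul_right.1
    (by simpa [hξ] using dvd_pow_self ξ hp)
  have pow_dvd_iff (w : Algebra.adjoin S ({ω, μ} : Set K)) (n : ℕ) :
      ξ ^ n ∣ φ w ↔ ∃ b ∈ B, (w : K) = x ^ n * b :=
    ⟨fun ⟨b, hb⟩ => ⟨b, b.2, congrArg Subtype.val hb⟩, fun ⟨b, hb, h⟩ => ⟨⟨b, hb⟩, Subtype.ext h⟩⟩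
  have hω' : φ (omegaA ω μ) - algebraMap S B h₁ = ξ := Subtype.ext hω
  have hμ' : φ (muA ω μ) - algebraMap S B h₂ = ξ * τ := Subtype.ext hμ
  refine (mem_symbPow_Pid_iff_pow_dvd φ hS hω' hμ' hξp hjac hP fun w hw => ?_).trans
    (pow_dvd_iff z _)
  obtain ⟨b, hb, hwb⟩ := (pow_dvd_iff w _).1 hw
  exact exists_algebraMap_mul_mem_pow_Pid hω hμ
    (hwb ▸ pow_mul_mem_span_of_mem_adjoin_pair hq ht hb)

theorem forall_integralClosure_mul_mem_iff {A : Subalgebra S K} {A' : Subalgebra V K}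
    (hA : A ≤ A'.restrictScalars S) (hloc : ∀ z ∈ A', ∃ u : S, ¬(p : S) ∣ u ∧ u • z ∈ A)
    (hsat : ∀ (z : K) (u : S), ¬(p : S) ∣ u → u • z ∈ A → p • z ∈ A → z ∈ A)
    (hpA : ∀ r : K, IsIntegral S r → p • r ∈ A) {z : K} :
    (∀ r ∈ integralClosure S K, z * r ∈ A) ↔
      z ∈ A ∧ ∀ c ∈ integralClosure V K, z * c ∈ A' := by
  refine ⟨fun h => ⟨mul_one z ▸ h 1 (one_mem _), fun c hc => ?_⟩, fun ⟨hz, h⟩ r hr => ?_⟩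
  · obtain ⟨u, hu⟩ := IsIntegral.exists_multiple_integral_of_isLocalization
      (Ideal.span {(p : S)}).primeCompl c hc
    have hmem : algebraMap S V u • (z * c) ∈ A' := by
      rw [algebraMap_smul, ← mul_smul_comm]
      exact hA (h _ hu)
    obtain ⟨v, hv⟩ := (IsLocalization.map_units V u).exists_left_inv
    rw [← one_smul V (z * c), ← hv, mul_smul]
    exact A'.smul_mem hmem v
  · obtain ⟨u, hu, hmem⟩ := hloc _ (h r (IsIntegral.tower_top hr))
    exact hsat _ u hu hmem (mul_smul_comm p z r ▸ mul_mem hz (hpA r hr))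

end Localization

section LocalConductor

open Polynomial IsLocalRing

theorem adjoin_pair_sub_algebraMap {R S A : Type*} [CommRing R] [CommRing S] [CommRing A]
    [Algebra S R] [Algebra S A] [Algebra R A] [IsScalarTower S R A] (x y : A) (h₁ h₂ : S) :
    Algebra.adjoin R {x - algebraMap S A h₁, y - algebraMap S A h₂} = Algebra.adjoin R {x, y} := by
  have mem (B : Subalgebra R A) (h : S) : algebraMap S A h ∈ B :=
    (B.restrictScalars S).algebraMap_mem h
  have mem_of_sub {B : Subalgebra R A} {z : A} {h : S} (hz : z - algebraMap S A h ∈ B) : z ∈ B :=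
    sub_add_cancel z (algebraMap S A h) ▸ add_mem hz (mem B h)
  refine le_antisymm (Algebra.adjoin_le (Set.pair_subset ?_ ?_))
    (Algebra.adjoin_le (Set.pair_subset (mem_of_sub (h := h₁) ?_) (mem_of_sub (h := h₂) ?_)))
  · exact sub_mem (Algebra.subset_adjoin (.inl rfl)) (mem _ _)
  · exact sub_mem (Algebra.subset_adjoin (.inr rfl)) (mem _ _)
  · exact Algebra.subset_adjoin (.inl rfl)
  · exact Algebra.subset_adjoin (.inr rfl)

theorem adjoin_pair_mul_le {R A : Type*} [CommRing R] [CommRing A] [Algebra R A] (x t : A) :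
    Algebra.adjoin R {x, x * t} ≤ Algebra.adjoin R {x, t} := by
  have hx : x ∈ Algebra.adjoin R {x, t} := Algebra.subset_adjoin (by simp)
  exact Algebra.adjoin_le (Set.pair_subset hx (mul_mem hx (Algebra.subset_adjoin (by simp))))

theorem maximalIdeal_eq_span_natCast (S : Type*) {V : Type*} [CommRing S] [CommRing V]
    [Algebra S V] [IsLocalRing V] {p : ℕ} [(Ideal.span {(p : S)}).IsPrime]
    [IsLocalization.AtPrime V (Ideal.span {(p : S)})] :
    maximalIdeal V = Ideal.span {(p : V)} := by
  rw [← IsLocalization.AtPrime.map_eq_maximalIdeal (Ideal.span {(p : S)}) V, Ideal.map_span,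
    Set.image_singleton, map_natCast]

variable {S V L K : Type*} [CommRing S] [CommRing V] [Field L] [Field K] [Algebra S V]
  [Algebra S L] [Algebra S K] [Algebra V K] [Algebra L K] [IsScalarTower S V K]
  [IsScalarTower S L K] {p : ℕ} {ω μ : K} {h₁ h₂ a b : S}

theorem not_dvd_of_pow_eq_of_finrank_eq [CharZero L] [FaithfulSMul S L] (hp : p.Prime)
    (hpu : ¬IsUnit (p : S)) (hω : ω ^ p = algebraMap S K (h₁ ^ p + a * p)) {g : S}
    (hμ : μ ^ p = algebraMap S K g) (htop : Algebra.adjoin L ({ω, μ} : Set K) = ⊤)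
    (hdeg : Module.finrank L K = p ^ 2) [IsIntegrallyClosed (Algebra.adjoin S ({ω} : Set K))] :
    ¬(p : S) ∣ a := by
  have : CharZero K := charZero_of_injective_algebraMap (algebraMap L K).injective
  have : FiniteDimensional L K := .of_finrank_pos (hdeg ▸ pow_pos hp.pos 2)
  obtain ⟨hmin, -⟩ := minpoly_eq_of_finrank_eq_mul htop
    (monic_X_pow_sub_C (algebraMap S L (h₁ ^ p + a * p)) hp.ne_zero)
    (by simp [hω, ← IsScalarTower.algebraMap_apply])
    (monic_X_pow_sub_C (algebraMap S _ g) hp.ne_zero)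
    (by simp [hμ, ← IsScalarTower.algebraMap_apply])
    (by rw [hdeg, natDegree_X_pow_sub_C, natDegree_X_pow_sub_C, sq])
  refine not_dvd_of_pow_eq_of_isIntegrallyClosed hp (by simpa using hp.ne_zero) hpu hω
    fun G hG hG0 => eq_zero_of_aeval_eq_zero_of_natDegree_lt (F := L) hG0 ?_
  rwa [hmin, natDegree_X_pow_sub_C]

theorem forall_integralClosure_mul_mem_adjoin_iff [CharZero L] [IsDomain S]
    [IsNoetherianRing S] [IsIntegrallyClosed S] [IsFractionRing S L]
    [(Ideal.span {(p : S)}).IsPrime] [IsLocalization.AtPrime V (Ideal.span {(p : S)})]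
    (hp : p.Prime) (hpS : Prime (p : S)) {f g : S}
    (hω : ω ^ p = algebraMap S K f) (hμ : μ ^ p = algebraMap S K g) (hfg : SatisfiesA1 f g)
    (htop : Algebra.adjoin L ({ω, μ} : Set K) = ⊤) (hdeg : Module.finrank L K = p ^ 2)
    [IsIntegrallyClosed (Algebra.adjoin S ({ω} : Set K))]
    [IsIntegrallyClosed (Algebra.adjoin S ({μ} : Set K))] {z : K} :
    (∀ r ∈ integralClosure S K, z * r ∈ Algebra.adjoin S ({ω, μ} : Set K)) ↔
      z ∈ Algebra.adjoin S ({ω, μ} : Set K) ∧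
        ∀ c ∈ integralClosure V K, z * c ∈ Algebra.adjoin V {ω, μ} := by
  refine forall_integralClosure_mul_mem_iff (p := p)
    (Algebra.adjoin_le Algebra.subset_adjoin) (fun w hw => ?_) (fun w u hu hw hpw => ?_)
    fun r hr => nsmul_mem_adjoin_pair_of_isIntegral hp.ne_zero hfg hω hμ htop hdeg hr
  · obtain ⟨u, hu⟩ := multiple_mem_adjoin_of_mem_localization_adjoin
      (Ideal.span {(p : S)}).primeCompl V _ w hw
    exact ⟨u, fun h => u.2 (Ideal.mem_span_singleton.2 h), hu⟩
  · exact mem_adjoin_pair_of_satisfiesA1 htop (monic_X_pow_sub_C f hp.ne_zero) (by simp [hω])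
      (monic_X_pow_sub_C g hp.ne_zero) (by simp [hμ]) (by simp [hdeg, sq])
      (satisfiesA1_of_prime_of_not_dvd hpS hu) (by simpa [Nat.cast_smul_eq_nsmul] using hpw) hw

theorem sub_pow_eq_mul_aeval_powRemainder_algebraMap (hp : p.Prime) {θ : K} {h c : S}
    (hθ : θ ^ p = algebraMap S K (h ^ p + c * p)) :
    (θ - algebraMap S K h) ^ p = p * aeval (θ - algebraMap S K h)
      (powRemainder p (algebraMap S V h) (algebraMap S V c)) := by
  rw [IsScalarTower.algebraMap_apply S V K h]
  refine sub_pow_eq_mul_aeval_powRemainder hp (hθ.trans ?_)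
  simp [← IsScalarTower.algebraMap_apply]

variable [Algebra V L] [IsScalarTower V L K]

theorem exists_monic_adjoin_natDegree_eq [IsLocalRing V] [FiniteDimensional L K] {x t : K}
    {E₁ E₂ : V[X]} (hpV : (p : V) ∈ maximalIdeal V) (hE₁ : IsUnit (E₁.coeff 0))
    (hdeg₁ : E₁.natDegree < p) (hdeg₂ : E₂.natDegree < p) (hx : x ^ p = p * aeval x E₁)
    (ht : aeval x E₁ * t ^ p = aeval (x * t) E₂) (htop : Algebra.adjoin L ({x, t} : Set K) = ⊤)
    (hdeg : Module.finrank L K = p ^ 2) :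
    ∃ q : (Algebra.adjoin V {x})[X], q.Monic ∧ q.natDegree = p ∧ aeval t q = 0 ∧
      ∀ G : (Algebra.adjoin V {x})[X], G.natDegree < q.natDegree → aeval t G = 0 → G = 0 := by
  obtain ⟨c, hc, hcE⟩ := exists_mem_adjoin_mul_aeval_eq_one hpV hE₁ hdeg₁ hx
  obtain ⟨q, hq, hqp, hqt⟩ := exists_monic_adjoin_of_mul_pow_eq_aeval hc hcE hdeg₂ ht
  obtain ⟨q₁, hq₁, hq₁p, hq₁x⟩ := exists_monic_of_pow_eq_aeval (x := x) (E := C (p : V) * E₁)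
    ((natDegree_C_mul_le _ _).trans_lt hdeg₁) (by simp [hx])
  exact ⟨q, hq, hqp, hqt, fun G => eq_zero_of_aeval_eq_zero_of_finrank_eq_mul htop hq₁ hq₁x hq hqt
    (by rw [hdeg, hq₁p, hqp, sq])⟩

theorem integralClosure_eq_adjoin [IsFractionRing V L] {s : Set K}
    (htop : Algebra.adjoin L s = ⊤) [Algebra.IsIntegral V (Algebra.adjoin V s)]
    [IsIntegrallyClosed (Algebra.adjoin V s)] : integralClosure V K = Algebra.adjoin V s := by
  refine le_antisymm (fun c hc => ?_) (le_integralClosure_iff_isIntegral.2 inferInstance)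
  obtain ⟨d, hd⟩ := multiple_mem_adjoin_of_mem_localization_adjoin (nonZeroDivisors V) L s c
    (htop ▸ Algebra.mem_top)
  have hd0 : algebraMap V K d ≠ 0 := by
    rw [IsScalarTower.algebraMap_apply V L K]
    exact (_root_.map_ne_zero _).2 (IsLocalization.map_units L d).ne_zero
  let B := Algebra.adjoin V s
  have hdiv : algebraMap B K ⟨_, hd⟩ / algebraMap B K (algebraMap V B d) = c :=
    div_eq_of_eq_mul hd0 (by rw [mul_comm]; exact Algebra.smul_def _ _)
  obtain ⟨e, he⟩ := dvd_of_isIntegral_div (K := K) (b := algebraMap V B d)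
    (fun h0 => hd0 (congrArg Subtype.val h0)) (hdiv.symm ▸ IsIntegral.tower_top hc)
  rw [← hdiv, he, map_mul, mul_div_cancel_left₀ _ (by exact hd0)]
  exact e.2

variable [IsLocalRing V] [(Ideal.span {(p : S)}).IsPrime]
  [IsLocalization.AtPrime V (Ideal.span {(p : S)})] [IsNoetherianRing V] [IsFractionRing V L]

theorem mem_symbPow_iff_of_mul_pow_eq_aeval {x t : K} {E₁ E₂ : V[X]} (hp : p.Prime)
    (hω : ω - algebraMap S K h₁ = x) (hμ : μ - algebraMap S K h₂ = x * t)
    (hE₁ : IsUnit (E₁.coeff 0)) (hdeg₁ : E₁.natDegree < p) (hdeg₂ : E₂.natDegree < p)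
    (hx : x ^ p = p * aeval x E₁) (ht : aeval x E₁ * t ^ p = aeval (x * t) E₂)
    (hd : ∀ d : V, E₁.coeff 0 * d ^ p - E₂.coeff 0 ∈ maximalIdeal V →
      IsUnit (E₂.coeff 1 * d - E₁.coeff 1 * d ^ p))
    (htop : Algebra.adjoin L ({ω, μ} : Set K) = ⊤) (hdeg : Module.finrank L K = p ^ 2)
    (hP : (Pid p ω μ h₁ h₂).IsPrime) {z : Algebra.adjoin S ({ω, μ} : Set K)} :
    z ∈ symbPow (Pid p ω μ h₁ h₂) hP (p - 1) ↔
      ∀ c ∈ integralClosure V K, (z : K) * c ∈ Algebra.adjoin V {ω, μ} := by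
  have : FiniteDimensional L K := .of_finrank_pos (hdeg ▸ pow_pos hp.pos 2)
  have hmax : maximalIdeal V = Ideal.span {(p : V)} := maximalIdeal_eq_span_natCast S
  have htop' : Algebra.adjoin L {x, t} = ⊤ := by
    rw [eq_top_iff, ← htop, ← adjoin_pair_sub_algebraMap ω μ h₁ h₂, hω, hμ]
    exact adjoin_pair_mul_le x t
  obtain ⟨q, hq, rfl, hqt, hind⟩ := exists_monic_adjoin_natDegree_eq
    (hmax ▸ Ideal.mem_span_singleton_self _) hE₁ hdeg₁ hdeg₂ hx ht htop' hdeg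
  have := finite_adjoin_pair (isIntegral_of_pow_eq_mul_aeval hdeg₁ hx) hq hqt
  have := isIntegrallyClosed_adjoin_pair_of_isUnit_coeff hp hmax hE₁ hx ht hd
  rw [integralClosure_eq_adjoin htop', mem_symbPow_Pid_iff hp.ne_zero hω hμ hE₁ hx hq hqt hP,
    ← forall_mul_mem_adjoin_pair_iff hq hqt hind, ← hμ, ← hω,
    adjoin_pair_sub_algebraMap (R := V)]

theorem mem_symbPow_iff_forall_integralClosure_mul_mem [CharZero K]
    (hp : p.Prime) (hω : ω ^ p = algebraMap S K (h₁ ^ p + a * p))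
    (hμ : μ ^ p = algebraMap S K (h₂ ^ p + b * p))
    (htop : Algebra.adjoin L ({ω, μ} : Set K) = ⊤) (hdeg : Module.finrank L K = p ^ 2)
    (ha : ¬(p : S) ∣ a) (hb : ¬(p : S) ∣ b) (hh₂ : ¬(p : S) ∣ h₂)
    (hi : ∀ i : ℕ, 1 ≤ i → i ≤ p - 1 → ¬(p : S) ∣ a * h₂ ^ p + i * b * h₁ ^ p)
    (hP : (Pid p ω μ h₁ h₂).IsPrime) {z : Algebra.adjoin S ({ω, μ} : Set K)} :
    z ∈ symbPow (Pid p ω μ h₁ h₂) hP (p - 1) ↔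
      ∀ c ∈ integralClosure V K, (z : K) * c ∈ Algebra.adjoin V {ω, μ} := by
  have hpK : (p : K) ≠ 0 := by simpa using hp.ne_zero
  let x := ω - algebraMap S K h₁
  let E (h c : S) : V[X] := powRemainder p (algebraMap S V h) (algebraMap S V c)
  have hdegE (h c : S) : (E h c).natDegree < p := natDegree_powRemainder_lt hp.ne_zero _ _
  have hE₀ (h c : S) : (E h c).coeff 0 = algebraMap S V c := coeff_powRemainder_zero _ _
  have hE₁ (h c : S) : (E h c).coeff 1 = algebraMap S V (-h ^ (p - 1)) := by
    simp [E, coeff_powRemainder_one hp]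
  have hunit : IsUnit ((E h₁ a).coeff 0) := (hE₀ h₁ a).symm ▸ isUnit_algebraMap_iff_not_dvd.2 ha
  have hx : x ^ p = p * aeval x (E h₁ a) := sub_pow_eq_mul_aeval_powRemainder_algebraMap hp hω
  have hx0 : x ≠ 0 := fun h0 => by
    rw [h0, zero_pow hp.ne_zero, ← coeff_zero_eq_aeval_zero', zero_eq_mul] at hx
    exact (hunit.map (algebraMap V K)).ne_zero (hx.resolve_left hpK)
  obtain ⟨t, ht⟩ : ∃ t, μ - algebraMap S K h₂ = x * t := ⟨_, (mul_div_cancel₀ _ hx0).symm⟩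
  have hEt : aeval x (E h₁ a) * t ^ p = aeval (x * t) (E h₂ b) := by
    refine mul_left_cancel₀ hpK ?_
    rw [← mul_assoc, ← hx, ← mul_pow, ← ht]
    exact sub_pow_eq_mul_aeval_powRemainder_algebraMap hp hμ
  refine mem_symbPow_iff_of_mul_pow_eq_aeval hp rfl ht hunit (hdegE _ _) (hdegE _ _) hx hEt
    (fun d hd => ?_) htop hdeg hP
  rw [hE₀, hE₀] at hd
  rw [hE₁, hE₁]
  exact isUnit_mul_sub_mul_pow_of_mem_maximalIdeal hp hb hh₂ hi hd

end LocalConductor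

section GlobalConductor

variable {S L K : Type*} [CommRing S] [Field L] [Field K] [Algebra S L] [Algebra S K]
  [Algebra L K] [IsScalarTower S L K] {p : ℕ} {ω μ : K} {h₁ h₂ a b : S}

theorem setOf_forall_mul_mem_eq_image_symbPow [IsDomain S] [IsNoetherianRing S]
    [IsIntegrallyClosed S] [CharZero L] [IsFractionRing S L] (hp : p.Prime)
    (hpS : Prime (p : S)) (hfg : SatisfiesA1 (h₁ ^ p + a * p) (h₂ ^ p + b * p))
    (hω : ω ^ p = algebraMap S K (h₁ ^ p + a * p)) (hμ : μ ^ p = algebraMap S K (h₂ ^ p + b * p))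
    (htop : Algebra.adjoin L ({ω, μ} : Set K) = ⊤) (hdeg : Module.finrank L K = p ^ 2)
    [IsIntegrallyClosed (Algebra.adjoin S ({ω} : Set K))]
    [IsIntegrallyClosed (Algebra.adjoin S ({μ} : Set K))]
    (ha : ¬(p : S) ∣ a) (hb : ¬(p : S) ∣ b) (hh₂ : ¬(p : S) ∣ h₂)
    (hi : ∀ i : ℕ, 1 ≤ i → i ≤ p - 1 → ¬(p : S) ∣ a * h₂ ^ p + i * b * h₁ ^ p)
    (hP : (Pid p ω μ h₁ h₂).IsPrime) :
    {x : K | ∀ r ∈ integralClosure S K, x * r ∈ Algebra.adjoin S ({ω, μ} : Set K)} =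
      Subtype.val '' (symbPow (Pid p ω μ h₁ h₂) hP (p - 1) :
        Set (Algebra.adjoin S ({ω, μ} : Set K))) := by
  have : CharZero K := charZero_of_injective_algebraMap (algebraMap L K).injective
  have : (Ideal.span {(p : S)}).IsPrime := (Ideal.span_singleton_prime hpS.ne_zero).2 hpS
  let M := (Ideal.span {(p : S)}).primeCompl
  let V := Localization.AtPrime (Ideal.span {(p : S)})
  have hM : M ≤ nonZeroDivisors S := Ideal.primeCompl_le_nonZeroDivisors _
  let _ : Algebra V L := IsLocalization.localizationAlgebraOfSubmonoidLe V L M _ hM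
  have : IsScalarTower S V L :=
    IsLocalization.localization_isScalarTower_of_submonoid_le V L M _ hM
  have : IsFractionRing V L := IsFractionRing.isFractionRing_of_isDomain_of_isLocalization M V L
  let _ : Algebra V K := ((algebraMap L K).comp (algebraMap V L)).toAlgebra
  have : IsScalarTower V L K := .of_algebraMap_eq' rfl
  have : IsScalarTower S V K := .to₁₂₄ S V L K
  ext z
  refine (forall_integralClosure_mul_mem_adjoin_iff (V := V) hp hpS hω hμ hfg htop hdeg).trans ?_
  have mem_iff (w) := mem_symbPow_iff_forall_integralClosure_mul_mem (V := V) hp hω hμ htop hdeg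
    ha hb hh₂ hi hP (z := w)
  exact ⟨fun ⟨hz, h⟩ => ⟨⟨z, hz⟩, (mem_iff _).2 h, rfl⟩,
    fun ⟨w, hw, hwz⟩ => hwz ▸ ⟨w.2, (mem_iff w).1 hw⟩⟩

end GlobalConductor

theorem stmt2_general
    {S : Type*} [CommRing S] [IsDomain S] [IsNoetherianRing S] [IsIntegrallyClosed S]
    {L : Type*} [Field L] [CharZero L] [Algebra S L] [IsFractionRing S L]
    {K : Type*} [Field K] [Algebra L K] [Algebra S K] [IsScalarTower S L K]
    {p : ℕ} (hp : p.Prime) (hp3 : 3 ≤ p) (hpS : Prime (p : S))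
    {f g h₁ h₂ a b : S} (hf : f = h₁ ^ p + a * (p : S)) (hg : g = h₂ ^ p + b * (p : S))
    (hfg : SatisfiesA1 f g) {ω μ : K} (hω : ω ^ p = algebraMap S K f)
    (hμ : μ ^ p = algebraMap S K g) (hKgen : Algebra.adjoin L ({ω, μ} : Set K) = ⊤)
    (hdeg : Module.finrank L K = p ^ 2)
    (hicω : IsIntegrallyClosed (Algebra.adjoin S ({ω} : Set K)))
    (hicμ : IsIntegrallyClosed (Algebra.adjoin S ({μ} : Set K)))
    (hnotin : ∀ i : ℕ, 1 ≤ i → i ≤ p - 1 → ¬∃ x y : S, f * g ^ i = x ^ p + y * (p : S) ^ 2)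
    (hP : (Pid p ω μ h₁ h₂).IsPrime) :
    {x : K | ∀ r ∈ integralClosure S K, x * r ∈ Algebra.adjoin S ({ω, μ} : Set K)} =
      Subtype.val '' (symbPow (Pid p ω μ h₁ h₂) hP (p - 1) :
        Set (Algebra.adjoin S ({ω, μ} : Set K))) := by
  subst hf hg
  have hKgen' : Algebra.adjoin L ({μ, ω} : Set K) = ⊤ := Set.pair_comm ω μ ▸ hKgen
  refine setOf_forall_mul_mem_eq_image_symbPow hp hpS hfg hω hμ hKgen hdeg
    (not_dvd_of_pow_eq_of_finrank_eq hp hpS.not_isUnit hω hμ hKgen hdeg)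
    (not_dvd_of_pow_eq_of_finrank_eq hp hpS.not_isUnit hμ hω hKgen' hdeg)
    (fun h => hnotin 2 one_le_two (Nat.le_sub_one_of_lt hp3) ?_)
    (fun i hi hip h => hnotin i hi hip (exists_mul_pow_eq_pow_add_mul_sq hi h)) hP
  exact exists_mul_sq_eq_pow_add_mul_sq hp.ne_zero h _

theorem stmt2
    {S : Type*} [CommRing S] [IsDomain S] [IsNoetherianRing S] [IsIntegrallyClosed S]
    {L : Type*} [Field L] [CharZero L] [Algebra S L] [IsFractionRing S L]
    {K : Type*} [Field K] [Algebra L K] [Algebra S K] [IsScalarTower S L K]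
    {p : ℕ} (hp : p.Prime) (hp3 : 3 ≤ p) (hpS : Prime ((p : ℕ) : S))
    (hSmodp : IsIntegrallyClosed (S ⧸ Ideal.span {((p : ℕ) : S)}))
    {f g h₁ h₂ a b : S} (hf : f = h₁ ^ p + a * (p : S)) (hg : g = h₂ ^ p + b * (p : S))
    (hfg : (¬IsUnit f ∧ ¬IsUnit g ∧ PaperSquarefree f ∧ PaperSquarefree g ∧ SatisfiesA1 f g) ∨
      (IsUnit f ∧ IsUnit g ∧ (∀ x : S, x ^ p ≠ f) ∧ (∀ x : S, x ^ p ≠ g)))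
    {ω μ : K} (hω : ω ^ p = algebraMap S K f) (hμ : μ ^ p = algebraMap S K g)
    (hKgen : Algebra.adjoin L ({ω, μ} : Set K) = ⊤)
    (hdeg : Module.finrank L K = p ^ 2)
    (hicω : IsIntegrallyClosed (Algebra.adjoin S ({ω} : Set K)))
    (hicμ : IsIntegrallyClosed (Algebra.adjoin S ({μ} : Set K)))
    (hnotin : ∀ i : ℕ, 1 ≤ i → i ≤ p - 1 → ¬∃ x y : S, f * g ^ i = x ^ p + y * (p : S) ^ 2)
    (hP : (Pid p ω μ h₁ h₂).IsPrime) :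
    {x : K | ∀ r ∈ integralClosure S K, x * r ∈ Algebra.adjoin S ({ω, μ} : Set K)} =
      Subtype.val '' (symbPow (Pid p ω μ h₁ h₂) hP (p - 1) : Set (Algebra.adjoin S ({ω, μ} : Set K))) :=
  stmt2_general hp hp3 hpS hf hg (hfg.elim (·.2.2.2.2) fun h => satisfiesA1_of_isUnit h.1 g) hω hμ
    hKgen hdeg hicω hicμ hnotin hP
end

section
/- Write p = 2k+1 and let h ∈ S ∖ pS. In S[W], set C := (W^p − h^p) − (W−h)^p = Σ_{j=1}^{k} (−1)^{j+1} binom(p,j) (W·h)^j (W^{p−2j} − h^{p−2j}); C is divisible by p·(W−h) in S[W], and the polynomial C' := C/(p(W−h)) satisfies C' ≡ h^{p−1} modulo the ideal (p, W−h)S[W]. -/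
/-!
The terms of the binomial expansion of `(W - h) ^ p` with indices `j` and `p - j` have equal
binomial coefficients and, `p` being odd, opposite signs; pairing them gives the formula for `C`,
whose index `0` term is `W ^ p - h ^ p`.

For the congruence, put `u = W - h` and expand `W ^ p = (u + h) ^ p` instead: `C` is the sum of the
middle terms, each a multiple of `p * u`, and only `p * u * h ^ (p - 1)` fails to be a multiple
of `p * u ^ 2`. So `C'` is congruent to `h ^ (p - 1)` even modulo `u` alone.
-/

open Finset

theorem sum_range_two_mul_eq_sum_add_reflect {M : Type*} [AddCommMonoid M] (f : ℕ → M) (m : ℕ) :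
    ∑ i ∈ range (2 * m), f i = ∑ i ∈ range m, (f i + f (2 * m - 1 - i)) := by
  rw [sum_add_distrib, two_mul, sum_range_add, ← sum_range_reflect (fun i ↦ f (m + i))]
  congr 1
  refine sum_congr rfl fun i hi ↦ ?_
  have : i < m := mem_range.mp hi
  congr 1
  omega

section CommSemiring

variable {R : Type*} [CommSemiring R]

theorem add_pow_two_mul_add_one_eq_sum (x y : R) (k : ℕ) :
    (x + y) ^ (2 * k + 1) = ∑ j ∈ range (k + 1), ((2 * k + 1).choose j : R) *
      (x * y) ^ j * (x ^ (2 * k + 1 - 2 * j) + y ^ (2 * k + 1 - 2 * j)) := by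
  rw [add_pow, show 2 * k + 1 + 1 = 2 * (k + 1) by ring, sum_range_two_mul_eq_sum_add_reflect]
  refine sum_congr rfl fun j hj ↦ ?_
  obtain ⟨d, rfl⟩ := Nat.exists_eq_add_of_le (mem_range_succ_iff.mp hj)
  have hsub : 2 * (j + d) + 1 - j = j + (2 * d + 1) := by omega
  have hsub_two : 2 * (j + d) + 1 - 2 * j = 2 * d + 1 := by omega
  have hreflect : 2 * (j + d + 1) - 1 - j = j + (2 * d + 1) := by omega
  have hsub_reflect : 2 * (j + d) + 1 - (j + (2 * d + 1)) = j := by omega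
  have hchoose : (2 * (j + d) + 1).choose (j + (2 * d + 1)) = (2 * (j + d) + 1).choose j :=
    Nat.choose_symm_of_eq_add (by ring)
  rw [hreflect, hsub, hsub_two, hsub_reflect, hchoose]
  ring

theorem exists_add_pow_prime_eq_add_mul_pow_pred_add_mul {p : ℕ} (hp : p.Prime) (x y : R) :
    ∃ r, (x + y) ^ p = x ^ p + y ^ p + p * x * (y ^ (p - 1) + x * r) := by
  obtain ⟨n, rfl⟩ := Nat.exists_eq_add_of_le' hp.two_le
  have hIoo : Ioo 0 (n + 2) = insert 1 (Ioo 1 (n + 2)) := by ext i; grind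
  have hchoose : (n + 2).choose 1 / (n + 2) = 1 := by simp
  have hdvd : x ∣ ∑ i ∈ Ioo 1 (n + 2),
      x ^ (i - 1) * y ^ (n + 2 - i - 1) * ((n + 2).choose i / (n + 2) : ℕ) :=
    dvd_sum fun i hi ↦
      ((dvd_pow_self x (Nat.sub_ne_zero_of_lt (mem_Ioo.mp hi).1)).mul_right _).mul_right _
  obtain ⟨s, hs⟩ := hdvd
  refine ⟨y * s, ?_⟩
  rw [add_pow_prime_eq hp, hIoo, sum_insert left_notMem_Ioo, hs, hchoose, Nat.cast_one,
    show n + 2 - 1 - 1 = n from rfl, show n + 2 - 1 = n + 1 from rfl]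
  ring

end CommSemiring

section CommRing

variable {R : Type*} [CommRing R]

theorem sub_pow_two_mul_add_one_eq_sum (x y : R) (k : ℕ) :
    (x - y) ^ (2 * k + 1) = ∑ j ∈ range (k + 1), (-1) ^ j * ((2 * k + 1).choose j : R) *
      (x * y) ^ j * (x ^ (2 * k + 1 - 2 * j) - y ^ (2 * k + 1 - 2 * j)) := by
  rw [sub_eq_add_neg, add_pow_two_mul_add_one_eq_sum]
  refine sum_congr rfl fun j hj ↦ ?_
  have hodd : Odd (2 * k + 1 - 2 * j) := ⟨k - j, by have := mem_range.mp hj; omega⟩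
  rw [hodd.neg_pow, mul_neg, neg_pow (x * y)]
  ring

theorem pow_sub_pow_sub_sub_pow_eq_sum (x y : R) (k : ℕ) :
    x ^ (2 * k + 1) - y ^ (2 * k + 1) - (x - y) ^ (2 * k + 1) =
      ∑ j ∈ Icc 1 k, (-1) ^ (j + 1) * ((2 * k + 1).choose j : R) *
        (x * y) ^ j * (x ^ (2 * k + 1 - 2 * j) - y ^ (2 * k + 1 - 2 * j)) := by
  rw [sub_pow_two_mul_add_one_eq_sum, sum_range_eq_add_Ico _ k.add_one_pos,
    Ico_add_one_right_eq_Icc]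
  simp [pow_succ]

theorem exists_pow_sub_pow_sub_sub_pow_eq_prime_mul {p : ℕ} (hp : p.Prime) (x y : R) :
    ∃ c, x ^ p - y ^ p - (x - y) ^ p = p * (x - y) * c ∧ x - y ∣ c - y ^ (p - 1) := by
  obtain ⟨r, hr⟩ := exists_add_pow_prime_eq_add_mul_pow_pred_add_mul hp (x - y) y
  rw [sub_add_cancel] at hr
  exact ⟨y ^ (p - 1) + (x - y) * r, by rw [hr]; ring, r, by ring⟩

theorem stmt5_general {p k : ℕ} (hp : p.Prime) (hk : p = 2 * k + 1) (x y : R) :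
    x ^ p - y ^ p - (x - y) ^ p =
      ∑ j ∈ Icc 1 k, (-1) ^ (j + 1) * (p.choose j : R) *
        (x * y) ^ j * (x ^ (p - 2 * j) - y ^ (p - 2 * j)) ∧
    ∃ c, x ^ p - y ^ p - (x - y) ^ p = p * (x - y) * c ∧ x - y ∣ c - y ^ (p - 1) :=
  ⟨hk ▸ pow_sub_pow_sub_sub_pow_eq_sum x y k, exists_pow_sub_pow_sub_sub_pow_eq_prime_mul hp x y⟩

end CommRing

theorem stmt5
    {S : Type*} [CommRing S] [IsDomain S] [IsNoetherianRing S] [IsIntegrallyClosed S]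
    [CharZero (FractionRing S)]
    {p : ℕ} (hp : p.Prime) (hp3 : 3 ≤ p) (hpS : Prime ((p : ℕ) : S))
    (hSmodp : IsIntegrallyClosed (S ⧸ Ideal.span {((p : ℕ) : S)}))
    (k : ℕ) (hk : p = 2 * k + 1) (h : S) (hh : h ∉ Ideal.span {((p : ℕ) : S)}) :
    (Polynomial.X ^ p - Polynomial.C (h ^ p)) - (Polynomial.X - Polynomial.C h) ^ p =
      ∑ j ∈ Finset.Icc 1 k, (-1 : Polynomial S) ^ (j + 1) * (p.choose j : Polynomial S) *
        (Polynomial.X * Polynomial.C h) ^ j *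
        (Polynomial.X ^ (p - 2 * j) - Polynomial.C h ^ (p - 2 * j)) ∧
    ∃ C' : Polynomial S,
      (Polynomial.X ^ p - Polynomial.C (h ^ p)) - (Polynomial.X - Polynomial.C h) ^ p =
        (p : Polynomial S) * (Polynomial.X - Polynomial.C h) * C' ∧
      C' - Polynomial.C (h ^ (p - 1)) ∈
        Ideal.span {(p : Polynomial S), Polynomial.X - Polynomial.C h} := by
  obtain ⟨hsum, c, hc, hdvd⟩ := stmt5_general hp hk Polynomial.X (Polynomial.C h)
  simp only [Polynomial.C_pow]
  exact ⟨hsum, c, hc, Ideal.mem_of_dvd _ hdvd (Ideal.subset_span (by simp))⟩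
end
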